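/- Let f be an integer-valued multiplicative function with f(p) = F(p) for all primes p, where F(T) ∈ ℤ[T] is a nonconstant polynomial without multiple roots. There is a constant C = C(F) such that: for every positive integer q all of whose prime factors exceed C, the set {n : gcd(f(n), q) = 1} is infinite, and for every integer a with gcd(a, q) = 1, #{n ≤ x : f(n) ≡ a (mod q)} / #{n ≤ x : gcd(f(n), q) = 1} → 1/φ(q) as x → ∞. -/

import Mathlib

/-- The number of positive integers `n ≤ x` satisfying the predicate `P`. -/
noncomputable def cnt (x : ℝ) (P : ℕ → Prop) : ℕ :=
  Set.ncard {n : ℕ | 0 < n ∧ (n : ℝ) ≤ x ∧ P n}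

/-!
By orthogonality of characters modulo `q` it suffices that, for every nontrivial character `χ`, the
sum of `χ (f n)` over `n ≤ x` is of smaller order than the number of `n ≤ x` with `f n` coprime
to `q`. Both are summatory functions of multiplicative functions `h` with `|h| ≤ g ≤ 1`. Writing
`log n = ∑_{d ∣ n} Λ(d)` expresses such a summatory function through the logarithmic sum
`∑_{n ≤ x} h(n) / n` and the mean value of `h` over the primes; iterating this relation, a strictly
smaller mean value over the primes forces a summatory function of smaller order.

The mean values over the primes are averages over the units `u` modulo `q`, by the prime number
theorem in arithmetic progressions (from the Wiener–Ikehara theorem and the nonvanishing of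
Dirichlet `L`-functions on the line `Re s = 1`). The inequality between them is strict unless `χ` is
constant on the unit values `F(u)`, so everything reduces to showing that the ratios of these values
generate the units modulo `q`. Modulo a large prime `p`, a proper subgroup containing the ratios
would make a power `F ^ m` with `m ≤ (p - 1) / 2` constant on too many points, which Stepanov's
method excludes; Hensel's lemma passes to prime powers and the Chinese remainder theorem to general
`q`.
-/

section FejerKernel

open Real MeasureTheory Filter Topology
open scoped FourierTransform

/-- The triangle function of half-width `R` and height `1`; its Fourier transform is the Fejér
kernel. -/
noncomputable def triangle (R t : ℝ) : ℝ := max 0 (1 - |t| / R)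

/-- The Fejér kernel on `ℝ` of bandwidth `R`, in closed form: a nonnegative integrable function
whose Fourier transform vanishes outside `[-R, R]`. -/
noncomputable def fejerKernel (R v : ℝ) : ℝ := R * sinc (π * (R * v)) ^ 2

lemma continuous_triangle (R : ℝ) : Continuous (triangle R) := by
  unfold triangle
  fun_prop

lemma triangle_eq_zero {R t : ℝ} (hR : 0 < R) (ht : R ≤ |t|) : triangle R t = 0 :=
  max_eq_left (sub_nonpos.mpr ((one_le_div hR).mpr ht))

lemma triangle_eq_of_mem_Icc {R t : ℝ} (ht : t ∈ Set.Icc 0 R) : triangle R t = 1 - t / R := by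
  rw [triangle, abs_of_nonneg ht.1, max_eq_right]
  exact sub_nonneg.mpr (div_le_one_of_le₀ ht.2 (ht.1.trans ht.2))

lemma integrable_triangle {R : ℝ} (hR : 0 < R) : Integrable (triangle R) :=
  (continuous_triangle R).integrable_of_hasCompactSupport <|
    HasCompactSupport.intro (isCompact_Icc (a := -R) (b := R)) fun _ ht ↦
      triangle_eq_zero hR (le_of_not_ge fun h ↦ ht (Set.mem_Icc.mpr (abs_le.mp h)))

lemma fejerKernel_nonneg {R : ℝ} (hR : 0 ≤ R) (v : ℝ) : 0 ≤ fejerKernel R v := by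
  unfold fejerKernel
  positivity

lemma continuous_fejerKernel (R : ℝ) : Continuous (fejerKernel R) := by
  unfold fejerKernel
  have := continuous_sinc
  fun_prop

lemma fejerKernel_eq_mul (R v : ℝ) : fejerKernel R v = R * fejerKernel 1 (R * v) := by
  simp only [fejerKernel, one_mul]

lemma fejerKernel_one_le (v : ℝ) : fejerKernel 1 v ≤ 2 * (1 + v ^ 2)⁻¹ := by
  rw [fejerKernel, one_mul, one_mul, ← div_eq_mul_inv, le_div_iff₀ (by positivity), mul_one_add]
  have h_one : sinc (π * v) ^ 2 ≤ 1 := (sq_le_one_iff_abs_le_one _).mpr (abs_sinc_le_one _)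
  have h_sq : sinc (π * v) ^ 2 * v ^ 2 ≤ 1 := by
    rcases eq_or_ne v 0 with rfl | hv
    · simp
    · rw [sinc_of_ne_zero (mul_ne_zero pi_ne_zero hv), ← mul_pow, mul_comm π v, ← div_div,
        div_right_comm, div_mul_cancel₀ _ hv, sq_le_one_iff_abs_le_one, abs_div, abs_of_pos pi_pos]
      exact div_le_one_of_le₀ ((abs_sin_le_one _).trans (by linarith [pi_gt_three])) pi_pos.le
  linarith

lemma integrable_fejerKernel {R : ℝ} (hR : 0 < R) : Integrable (fejerKernel R) := by
  have h_one : Integrable (fejerKernel 1) :=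
    (integrable_inv_one_add_sq.const_mul 2).mono'
      (continuous_fejerKernel 1).aestronglyMeasurable <| ae_of_all _ fun v ↦ by
        rw [norm_of_nonneg (fejerKernel_nonneg zero_le_one v)]
        exact fejerKernel_one_le v
  exact ((h_one.comp_mul_left' hR.ne').const_mul R).congr
    (ae_of_all _ fun v ↦ (fejerKernel_eq_mul R v).symm)

lemma integral_fejerKernel {R : ℝ} (hR : 0 < R) :
    ∫ v, fejerKernel R v = ∫ v, fejerKernel 1 v := by
  simp_rw [fejerKernel_eq_mul R]
  rw [integral_const_mul, Measure.integral_comp_mul_left, abs_of_pos (inv_pos.mpr hR),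
    smul_eq_mul, mul_inv_cancel_left₀ hR.ne']

lemma integral_fejerKernel_pos : 0 < ∫ v, fejerKernel 1 v := by
  rw [integral_pos_iff_support_of_nonneg (fejerKernel_nonneg zero_le_one)
    (integrable_fejerKernel one_pos)]
  refine (isOpen_compl_singleton.preimage (continuous_fejerKernel 1)).measure_pos _ ⟨0, ?_⟩
  simp [fejerKernel]

lemma tendsto_intervalIntegral_fejerKernel {η : ℝ} (hη : 0 < η) :
    Tendsto (fun R ↦ ∫ v in (-η)..η, fejerKernel R v) atTop (𝓝 (∫ v, fejerKernel 1 v)) := by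
  have h_scale : ∀ R, ∫ v in (-η)..η, fejerKernel R v
      = ∫ v in (R * -η)..(R * η), fejerKernel 1 v := fun R ↦ by
    simp_rw [fejerKernel_eq_mul R]
    rw [intervalIntegral.integral_const_mul, ← smul_eq_mul,
      intervalIntegral.smul_integral_comp_mul_left]
  simp_rw [h_scale]
  exact intervalIntegral_tendsto_integral (integrable_fejerKernel one_pos)
    (tendsto_id.atTop_mul_const_of_neg (neg_lt_zero.mpr hη)) (tendsto_id.atTop_mul_const hη)

lemma integral_one_sub_div_mul_cos {R a : ℝ} (hR : R ≠ 0) (ha : a ≠ 0) :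
    ∫ t in (0)..R, (1 - t / R) * cos (t * a) = (1 - cos (R * a)) / (R * a ^ 2) := by
  rw [intervalIntegral.integral_eq_sub_of_hasDerivAt
    (f := fun t ↦ (1 - t / R) * (sin (t * a) / a) - cos (t * a) / (R * a ^ 2))]
  · simp only [zero_div, sub_zero, zero_mul, sin_zero, mul_zero, cos_zero, one_div, mul_inv_rev,
      zero_sub, sub_neg_eq_add]
    field_simp
    ring
  · intro t _
    have h_lin : HasDerivAt (fun t : ℝ ↦ t * a) a t := by simpa using (hasDerivAt_id t).mul_const a
    have h_fac : HasDerivAt (fun t : ℝ ↦ 1 - t / R) (-(1 / R)) t :=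
      ((hasDerivAt_id t).div_const R).const_sub 1
    refine ((h_fac.mul (h_lin.sin.div_const a)).sub
      (h_lin.cos.div_const (R * a ^ 2))).congr_deriv ?_
    field_simp
    ring
  · exact Continuous.intervalIntegrable (by fun_prop) _ _

lemma integral_triangle_mul_cos {R : ℝ} (hR : 0 < R) (v : ℝ) :
    ∫ t, triangle R t * cos (t * (2 * π * v)) = fejerKernel R v := by
  have h_even : ∀ t, triangle R t * cos (t * (2 * π * v))
      = triangle R |t| * cos (|t| * (2 * π * v)) := fun t ↦ by
    rcases abs_choice t with h | h <;> simp [h, triangle]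
  have h_tail : ∀ t ∈ Set.Ioi R, triangle R t * cos (t * (2 * π * v)) = 0 := fun t ht ↦ by
    rw [triangle_eq_zero hR (ht.le.trans (le_abs_self t)), zero_mul]
  rw [integral_congr_ae (ae_of_all _ h_even),
    integral_comp_abs (f := fun t ↦ triangle R t * cos (t * (2 * π * v))),
    ← Set.Ioc_union_Ioi_eq_Ioi hR.le,
    setIntegral_eq_of_subset_of_forall_sdiff_eq_zero (s := Set.Ioc 0 R)
      (measurableSet_Ioc.union measurableSet_Ioi) Set.subset_union_left
      fun t ht ↦ h_tail t (ht.1.resolve_left ht.2),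
    ← intervalIntegral.integral_of_le hR.le,
    intervalIntegral.integral_congr (g := fun t ↦ (1 - t / R) * cos (t * (2 * π * v)))]
  · rcases eq_or_ne v 0 with rfl | hv
    · simp only [mul_zero, cos_zero, mul_one, fejerKernel, sinc_zero, one_pow]
      rw [intervalIntegral.integral_sub (by simp) (Continuous.intervalIntegrable (by fun_prop) _ _),
        intervalIntegral.integral_div, integral_id, intervalIntegral.integral_const, smul_eq_mul]
      field_simp
      ring
    · have h_double : 1 - cos (R * (2 * π * v)) = 2 * sin (π * (R * v)) ^ 2 := by
        rw [show R * (2 * π * v) = 2 * (π * (R * v)) by ring, cos_two_mul, cos_sq']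
        ring
      rw [integral_one_sub_div_mul_cos hR.ne' (by positivity), h_double, fejerKernel,
        sinc_of_ne_zero (by positivity)]
      field_simp
  · intro t ht
    rw [Set.uIcc_of_le hR.le] at ht
    exact congrArg (· * cos (t * (2 * π * v))) (triangle_eq_of_mem_Icc ht)

lemma fourierInv_triangle {R : ℝ} (hR : 0 < R) (v : ℝ) :
    𝓕⁻ (fun t ↦ (triangle R t : ℂ)) v = fejerKernel R v := by
  set e : ℝ → ℂ := fun t ↦ Complex.exp (((t * (2 * π * v) : ℝ) : ℂ) * Complex.I) with he
  have he_int : Integrable fun t ↦ e t * triangle R t :=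
    (integrable_triangle hR).ofReal.bdd_mul (c := 1) (by fun_prop)
      (ae_of_all _ fun t ↦ (Complex.norm_exp_ofReal_mul_I _).le)
  have h_even : ∀ t, triangle R (-t) = triangle R t := fun t ↦ by simp [triangle]
  have h_cos : ∀ t, e t * triangle R t + e (-t) * triangle R (-t)
      = 2 * ((triangle R t * cos (t * (2 * π * v)) : ℝ) : ℂ) := fun t ↦ by
    simp only [he, h_even, neg_mul, Complex.ofReal_neg, Complex.ofReal_mul, Complex.ofReal_cos,
      Complex.cos]
    ring
  have h_twice : 2 * ∫ t, e t * triangle R t = 2 * (fejerKernel R v : ℂ) := by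
    calc 2 * ∫ t, e t * triangle R t
        = (∫ t, e t * triangle R t) + ∫ t, e (-t) * triangle R (-t) := by
          rw [integral_neg_eq_self fun t ↦ e t * triangle R t, two_mul]
      _ = ∫ t, 2 * ((triangle R t * cos (t * (2 * π * v)) : ℝ) : ℂ) := by
          rw [← integral_add he_int he_int.comp_neg]
          exact integral_congr_ae (ae_of_all _ h_cos)
      _ = 2 * (fejerKernel R v : ℂ) := by
          rw [integral_const_mul, integral_complex_ofReal, integral_triangle_mul_cos hR]
  rw [← mul_left_cancel₀ two_ne_zero h_twice, fourierInv_eq']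
  refine integral_congr_ae (ae_of_all _ fun t ↦ ?_)
  simp only [he, smul_eq_mul, Real.inner_apply, mul_assoc, mul_left_comm t]

end FejerKernel

section LaplaceTransform

open Complex MeasureTheory Filter Topology
open scoped Real FourierTransform

variable {B : ℝ → ℂ} {C R : ℝ} {K : ℂ → ℂ} {φ : ℝ → ℂ}

lemma fourierInv_eq_integral_cexp (φ : ℝ → ℂ) (y : ℝ) :
    𝓕⁻ φ y = ∫ t, φ t * cexp (2 * π * t * I * y) := by
  rw [Real.fourierInv_eq']
  refine integral_congr_ae (ae_of_all _ fun t ↦ ?_)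
  simp only [Real.inner_apply, smul_eq_mul, mul_comm (φ t)]
  push_cast
  ring_nf

lemma norm_cexp_two_pi_mul_I (t y : ℝ) : ‖cexp (2 * π * t * I * y)‖ = 1 := by
  rw [show (2 * π * t * I * y : ℂ) = (2 * π * t * y : ℝ) * I by push_cast; ring,
    norm_exp_ofReal_mul_I]

lemma fourierInv_mul_laplace (hB : AEStronglyMeasurable B) (hC : ∀ u, ‖B u‖ ≤ C)
    (hφ : Integrable φ) {δ : ℝ} (hδ : 0 < δ) (y : ℝ) :
    𝓕⁻ (fun t ↦ φ t * ∫ u in Set.Ioi (0 : ℝ), B u * cexp (-(δ + 2 * π * t * I) * u)) y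
      = ∫ u in Set.Ioi (0 : ℝ), cexp (-δ * u) * (B u * 𝓕⁻ φ (y - u)) := by
  have h_exp : ∀ t u : ℝ, cexp (-(δ + 2 * π * t * I) * u) * cexp (2 * π * t * I * y)
      = cexp (-δ * u) * cexp (2 * π * t * I * (y - u : ℝ)) := fun t u ↦ by
    rw [← exp_add, ← exp_add]
    congr 1
    push_cast
    ring
  have h_int : Integrable
      (fun p : ℝ × ℝ ↦ φ p.1 * (B p.2 * cexp (-(δ + 2 * π * p.1 * I) * p.2))
        * cexp (2 * π * p.1 * I * y)) (volume.prod (volume.restrict (Set.Ioi 0))) := by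
    have h_decay : IntegrableOn (fun u ↦ C * Real.exp (-δ * u)) (Set.Ioi 0) :=
      (integrableOn_exp_mul_Ioi (neg_lt_zero.mpr hδ) 0).const_mul C
    refine (hφ.norm.mul_prod h_decay).mono' ?_ (ae_of_all _ fun p ↦ ?_)
    · exact ((hφ.1.comp_fst).mul ((hB.restrict.comp_snd).mul
        (Continuous.aestronglyMeasurable (by fun_prop)))).mul
        (Continuous.aestronglyMeasurable (by fun_prop))
    · have h_re : ((-(δ + 2 * π * p.1 * I) * p.2 : ℂ)).re = -δ * p.2 := by simp
      rw [norm_mul, norm_mul, norm_mul, norm_cexp_two_pi_mul_I, mul_one, norm_exp, h_re]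
      gcongr
      exact hC _
  calc 𝓕⁻ (fun t ↦ φ t * ∫ u in Set.Ioi (0 : ℝ), B u * cexp (-(δ + 2 * π * t * I) * u)) y
      = ∫ t, ∫ u in Set.Ioi (0 : ℝ), φ t * (B u * cexp (-(δ + 2 * π * t * I) * u))
          * cexp (2 * π * t * I * y) := by
        simp_rw [fourierInv_eq_integral_cexp, integral_mul_const, integral_const_mul]
    _ = ∫ u in Set.Ioi (0 : ℝ), ∫ t, φ t * (B u * cexp (-(δ + 2 * π * t * I) * u))
          * cexp (2 * π * t * I * y) := integral_integral_swap h_int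
    _ = _ := by
        refine integral_congr_ae (ae_of_all _ fun u ↦ ?_)
        simp only
        rw [fourierInv_eq_integral_cexp, ← integral_const_mul, ← integral_const_mul]
        refine integral_congr_ae (ae_of_all _ fun t ↦ ?_)
        linear_combination (φ t * B u) * h_exp t u

lemma tendsto_integral_cexp_neg_mul {g : ℝ → ℂ} (hg : IntegrableOn g (Set.Ioi 0)) :
    Tendsto (fun δ : ℝ ↦ ∫ u in Set.Ioi (0 : ℝ), cexp (-δ * u) * g u) (𝓝[>] 0)
      (𝓝 (∫ u in Set.Ioi (0 : ℝ), g u)) := by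
  refine tendsto_integral_filter_of_dominated_convergence (fun u ↦ ‖g u‖)
    (Eventually.of_forall fun δ ↦ (Continuous.aestronglyMeasurable (by fun_prop)).mul hg.1)
    ?_ hg.norm (ae_of_all _ fun u ↦ ?_)
  · filter_upwards [self_mem_nhdsWithin] with δ hδ
    filter_upwards [ae_restrict_mem measurableSet_Ioi] with u hu
    have h_re : (-δ * u : ℂ).re = -(δ * u) := by simp
    rw [norm_mul, norm_exp, h_re]
    exact mul_le_of_le_one_left (norm_nonneg _)
      (Real.exp_le_one_iff.mpr (neg_nonpos.mpr (mul_pos hδ hu).le))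
  · have h_cont : Continuous fun δ : ℝ ↦ cexp (-δ * u) * g u := by fun_prop
    simpa using (h_cont.tendsto 0).mono_left nhdsWithin_le_nhds

lemma tendsto_fourierInv_mul_boundary (hφ : Integrable φ)
    (hφR : ∀ t, R < |t| → φ t = 0) (hK : ContinuousOn K {z | 0 ≤ z.re}) (y : ℝ) :
    Tendsto (fun δ : ℝ ↦ 𝓕⁻ (fun t ↦ φ t * K (δ + 2 * π * t * I)) y) (𝓝[>] 0)
      (𝓝 (𝓕⁻ (fun t ↦ φ t * K (2 * π * t * I)) y)) := by
  have h_cont : ContinuousOn (fun p : ℝ × ℝ ↦ K (p.1 + 2 * π * p.2 * I)) {p | 0 ≤ p.1} :=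
    hK.comp (by fun_prop) fun p hp ↦ by simpa using hp
  have h_fst : ∀ {δ : ℝ}, 0 ≤ δ → Continuous fun t : ℝ ↦ K (δ + 2 * π * t * I) := fun hδ ↦
    h_cont.comp_continuous (f := fun t ↦ (_, t)) (by fun_prop) fun _ ↦ hδ
  obtain ⟨D, hD⟩ := (isCompact_Icc.prod isCompact_Icc).exists_bound_of_continuousOn
    (h_cont.mono fun (p : ℝ × ℝ) (hp : p ∈ Set.Icc 0 1 ×ˢ Set.Icc (-R) R) ↦ hp.1.1)
  have h_unit : ∀ᶠ δ : ℝ in 𝓝[>] 0, δ ∈ Set.Ioc (0 : ℝ) 1 := Ioc_mem_nhdsGT one_pos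
  simp_rw [fourierInv_eq_integral_cexp]
  refine tendsto_integral_filter_of_dominated_convergence (fun t ↦ ‖φ t‖ * D) ?_ ?_
    (hφ.norm.mul_const D) (ae_of_all _ fun t ↦ ?_)
  · filter_upwards [h_unit] with δ hδ
    exact (hφ.1.mul (h_fst hδ.1.le).aestronglyMeasurable).mul
      (Continuous.aestronglyMeasurable (by fun_prop))
  · filter_upwards [h_unit] with δ hδ
    refine ae_of_all _ fun t ↦ ?_
    rw [norm_mul, norm_cexp_two_pi_mul_I, mul_one, norm_mul]
    rcases lt_or_ge R |t| with ht | ht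
    · simp [hφR t ht]
    · gcongr
      exact hD (δ, t) ⟨⟨hδ.1.le, hδ.2⟩, Set.mem_Icc.mpr (abs_le.mp ht)⟩
  · refine ((Tendsto.const_mul _ ?_).mul_const _)
    have h_at := (h_cont (0, t) (le_refl (0 : ℝ))).tendsto.comp (x := 𝓝[>] 0)
      (f := fun δ : ℝ ↦ (δ, t)) <| tendsto_nhdsWithin_iff.mpr
        ⟨(Continuous.tendsto' (by fun_prop) _ _ rfl).mono_left nhdsWithin_le_nhds,
          h_unit.mono fun δ hδ ↦ hδ.1.le⟩
    simpa [Function.comp_def] using h_at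

lemma integral_mul_fourierInv_eq_boundary (hB : AEStronglyMeasurable B) (hC : ∀ u, ‖B u‖ ≤ C)
    (hφ : Integrable φ) (hφR : ∀ t, R < |t| → φ t = 0) (hφ' : Integrable (𝓕⁻ φ))
    (hK : ContinuousOn K {z | 0 ≤ z.re})
    (hBK : ∀ z : ℂ, 0 < z.re → ∫ u in Set.Ioi (0 : ℝ), B u * cexp (-z * u) = K z) (y : ℝ) :
    ∫ u in Set.Ioi (0 : ℝ), B u * 𝓕⁻ φ (y - u) = 𝓕⁻ (fun t ↦ φ t * K (2 * π * t * I)) y := by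
  have h_int : Integrable fun u ↦ B u * 𝓕⁻ φ (y - u) :=
    (hφ'.comp_sub_left y).bdd_mul hB (ae_of_all _ hC)
  refine tendsto_nhds_unique (tendsto_integral_cexp_neg_mul h_int.integrableOn)
    ((tendsto_fourierInv_mul_boundary hφ hφR hK y).congr' ?_)
  filter_upwards [self_mem_nhdsWithin] with δ hδ
  rw [← fourierInv_mul_laplace hB hC hφ hδ y]
  refine congrArg (fun g : ℝ → ℂ ↦ 𝓕⁻ g y) (funext fun t ↦ ?_)
  rw [hBK _ (by simpa using hδ)]

/-- Riemann–Lebesgue: only the restriction of `K` to the compact segment of the imaginary axis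
seen by `φ` matters, so continuity of `K` up to the axis suffices. -/
lemma tendsto_integral_mul_fourierInv (hB : AEStronglyMeasurable B) (hC : ∀ u, ‖B u‖ ≤ C)
    (hφ : Integrable φ) (hφR : ∀ t, R < |t| → φ t = 0) (hφ' : Integrable (𝓕⁻ φ))
    (hK : ContinuousOn K {z | 0 ≤ z.re})
    (hBK : ∀ z : ℂ, 0 < z.re → ∫ u in Set.Ioi (0 : ℝ), B u * cexp (-z * u) = K z) :
    Tendsto (fun y ↦ ∫ u in Set.Ioi (0 : ℝ), B u * 𝓕⁻ φ (y - u)) atTop (𝓝 0) := by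
  simp_rw [integral_mul_fourierInv_eq_boundary hB hC hφ hφR hφ' hK hBK,
    Real.fourierInv_eq_fourier_neg]
  exact (Real.zero_at_infty_fourier _).comp
    (tendsto_neg_atTop_atBot.mono_right atBot_le_cocompact)

lemma tendsto_integral_mul_fejerKernel (hB : AEStronglyMeasurable B) (hC : ∀ u, ‖B u‖ ≤ C)
    (hR : 0 < R) (hK : ContinuousOn K {z | 0 ≤ z.re})
    (hBK : ∀ z : ℂ, 0 < z.re → ∫ u in Set.Ioi (0 : ℝ), B u * cexp (-z * u) = K z) :
    Tendsto (fun y ↦ ∫ u in Set.Ioi (0 : ℝ), B u * fejerKernel R (y - u)) atTop (𝓝 0) := by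
  simp_rw [← fourierInv_triangle hR]
  refine tendsto_integral_mul_fourierInv hB hC (integrable_triangle hR).ofReal
    (fun t ht ↦ by rw [triangle_eq_zero hR ht.le, ofReal_zero]) ?_ hK hBK
  exact (integrable_fejerKernel hR).ofReal.congr
    (ae_of_all _ fun v ↦ (fourierInv_triangle hR v).symm)

end LaplaceTransform

section WienerIkehara

open Real MeasureTheory Filter Topology

variable {A k : ℝ → ℝ} {C c : ℝ}

lemma measurable_of_monotone_mul_exp (hmono : Monotone fun u ↦ A u * exp u) : Measurable A := by
  have h_eq : A = fun u ↦ (A u * exp u) * exp (-u) := by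
    ext u
    rw [mul_assoc, ← exp_add, add_neg_cancel, exp_zero, mul_one]
  rw [h_eq]
  exact hmono.measurable.mul (by fun_prop)

lemma le_mul_exp_of_monotone_mul_exp (h0 : ∀ u, 0 ≤ A u) (hmono : Monotone fun u ↦ A u * exp u)
    {u v r : ℝ} (huv : u ≤ v) (hvr : v ≤ u + r) : A u ≤ A v * exp r :=
  calc A u = A u * exp u * exp (-u) := by
        rw [mul_assoc, ← exp_add, add_neg_cancel, exp_zero, mul_one]
    _ ≤ A v * exp v * exp (-u) := mul_le_mul_of_nonneg_right (hmono huv) (exp_pos _).le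
    _ = A v * exp (v - u) := by rw [mul_assoc, ← exp_add, sub_eq_add_neg]
    _ ≤ A v * exp r := by
      have := h0 v
      gcongr
      linarith

lemma integrable_comp_sub_left_mul (h0 : ∀ u, 0 ≤ A u) (hC : ∀ u, A u ≤ C)
    (hmono : Monotone fun u ↦ A u * exp u) (hk : Integrable k) (y : ℝ) :
    Integrable fun v ↦ A (y - v) * k v :=
  hk.bdd_mul (c := C)
    ((measurable_of_monotone_mul_exp hmono).comp (by fun_prop)).aestronglyMeasurable
    (ae_of_all _ fun v ↦ by rw [norm_of_nonneg (h0 _)]; exact hC _)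

lemma mul_intervalIntegral_le_exp_mul_integral (h0 : ∀ u, 0 ≤ A u) (hC : ∀ u, A u ≤ C)
    (hmono : Monotone fun u ↦ A u * exp u) (hk : Integrable k) (hk0 : ∀ v, 0 ≤ k v)
    {η : ℝ} (hη : 0 ≤ η) (y : ℝ) :
    A (y - η) * ∫ v in (-η)..η, k v ≤ exp (2 * η) * ∫ v, A (y - v) * k v := by
  have h_int := (integrable_comp_sub_left_mul h0 hC hmono hk y).const_mul (exp (2 * η))
  rw [← integral_const_mul, intervalIntegral.integral_of_le (by linarith), ← integral_const_mul]
  calc ∫ v in Set.Ioc (-η) η, A (y - η) * k v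
      ≤ ∫ v in Set.Ioc (-η) η, exp (2 * η) * (A (y - v) * k v) := by
        refine setIntegral_mono_on (hk.const_mul _).integrableOn h_int.integrableOn
          measurableSet_Ioc fun v hv ↦ ?_
        have h_le := le_mul_exp_of_monotone_mul_exp h0 hmono (u := y - η) (v := y - v)
          (r := 2 * η) (by linarith [hv.2]) (by linarith [hv.1])
        nlinarith [mul_le_mul_of_nonneg_right h_le (hk0 v)]
    _ ≤ ∫ v, exp (2 * η) * (A (y - v) * k v) :=
        setIntegral_le_integral h_int <| ae_of_all _ fun v ↦ by
          have := h0 (y - v)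
          have := hk0 v
          positivity

lemma integral_le_mul_intervalIntegral_add (h0 : ∀ u, 0 ≤ A u) (hC : ∀ u, A u ≤ C)
    (hmono : Monotone fun u ↦ A u * exp u) (hk : Integrable k) (hk0 : ∀ v, 0 ≤ k v)
    {η : ℝ} (hη : 0 ≤ η) (y : ℝ) :
    ∫ v, A (y - v) * k v ≤ A (y + η) * exp (2 * η) * (∫ v in (-η)..η, k v)
      + C * ((∫ v, k v) - ∫ v in (-η)..η, k v) := by
  have h_int := integrable_comp_sub_left_mul h0 hC hmono hk y
  rw [intervalIntegral.integral_of_le (by linarith),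
    ← integral_add_compl (measurableSet_Ioc (a := -η) (b := η)) h_int,
    ← integral_add_compl (measurableSet_Ioc (a := -η) (b := η)) hk, add_sub_cancel_left,
    ← integral_const_mul, ← integral_const_mul]
  refine add_le_add ?_ ?_
  · refine setIntegral_mono_on h_int.integrableOn (hk.const_mul _).integrableOn
      measurableSet_Ioc fun v hv ↦ mul_le_mul_of_nonneg_right ?_ (hk0 v)
    exact le_mul_exp_of_monotone_mul_exp h0 hmono (by linarith [hv.1]) (by linarith [hv.2])
  · exact setIntegral_mono_on h_int.integrableOn (hk.const_mul _).integrableOn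
      measurableSet_Ioc.compl fun v _ ↦ mul_le_mul_of_nonneg_right (hC _) (hk0 v)

lemma tendsto_of_tendsto_integral_kernel (h0 : ∀ u, 0 ≤ A u) (hC : ∀ u, A u ≤ C)
    (hmono : Monotone fun u ↦ A u * exp u)
    (h_kernel : ∀ ε ∈ Set.Ioo (0 : ℝ) 1, ∃ k : ℝ → ℝ, Integrable k ∧ (∀ v, 0 ≤ k v) ∧
      ∫ v, k v = 1 ∧ 1 - ε ≤ ∫ v in (-ε)..ε, k v ∧
      Tendsto (fun y ↦ ∫ v, A (y - v) * k v) atTop (𝓝 c)) :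
    Tendsto A atTop (𝓝 c) := by
  have h_bounds : ∀ ε ∈ Set.Ioo (0 : ℝ) 1, ∀ᶠ y in atTop,
      (c - ε - C * ε) * exp (-(2 * ε)) ≤ A y ∧ A y ≤ exp (2 * ε) * (c + ε) / (1 - ε) := by
    intro ε hε
    obtain ⟨k, hk, hk0, hk1, hkε, hlim⟩ := h_kernel ε hε
    have h_window : ∫ v in (-ε)..ε, k v ≤ 1 := by
      rw [intervalIntegral.integral_of_le (by linarith [hε.1]), ← hk1]
      exact setIntegral_le_integral hk (ae_of_all _ hk0)
    have hC0 : 0 ≤ C := (h0 0).trans (hC 0)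
    filter_upwards [
      (hlim.comp (tendsto_atTop_add_const_right atTop ε tendsto_id)).eventually
        (eventually_le_nhds (lt_add_of_pos_right c hε.1)),
      (hlim.comp (tendsto_atTop_add_const_right atTop (-ε) tendsto_id)).eventually
        (eventually_ge_nhds (sub_lt_self c hε.1))] with y h_upper h_lower
    have h_le := mul_intervalIntegral_le_exp_mul_integral h0 hC hmono hk hk0 hε.1.le (y + ε)
    have h_ge := integral_le_mul_intervalIntegral_add h0 hC hmono hk hk0 hε.1.le (y + -ε)
    rw [add_sub_cancel_right] at h_le
    rw [neg_add_cancel_right, hk1] at h_ge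
    have hAe : 0 ≤ A y * exp (2 * ε) := mul_nonneg (h0 y) (exp_pos _).le
    constructor
    · rw [exp_neg, ← div_eq_mul_inv, div_le_iff₀ (exp_pos _)]
      have h_first := mul_le_of_le_one_right hAe h_window
      have h_second := mul_le_mul_of_nonneg_left (sub_le_comm.mp hkε) hC0
      linarith [h_lower.trans h_ge]
    · rw [le_div_iff₀ (by linarith [hε.2])]
      exact (mul_le_mul_of_nonneg_left hkε (h0 y)).trans (h_le.trans (by gcongr; exact h_upper))
  have h_small : ∀ᶠ ε : ℝ in 𝓝[>] 0, ε ∈ Set.Ioo (0 : ℝ) 1 := Ioo_mem_nhdsGT one_pos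
  have h_lower_lim : Tendsto (fun ε ↦ (c - ε - C * ε) * exp (-(2 * ε))) (𝓝[>] 0) (𝓝 c) :=
    (Continuous.tendsto' (by fun_prop) _ _ (by simp)).mono_left nhdsWithin_le_nhds
  have h_upper_lim : Tendsto (fun ε ↦ exp (2 * ε) * (c + ε) / (1 - ε)) (𝓝[>] 0) (𝓝 c) := by
    have h_cont : ContinuousAt (fun ε ↦ exp (2 * ε) * (c + ε) / (1 - ε)) 0 :=
      ContinuousAt.div (by fun_prop) (by fun_prop) (by norm_num)
    simpa using h_cont.tendsto.mono_left nhdsWithin_le_nhds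
  refine tendsto_order.mpr ⟨fun a ha ↦ ?_, fun a ha ↦ ?_⟩
  · obtain ⟨ε, hε, hε'⟩ := ((h_lower_lim.eventually (eventually_gt_nhds ha)).and h_small).exists
    exact (h_bounds ε hε').mono fun y hy ↦ hε.trans_le hy.1
  · obtain ⟨ε, hε, hε'⟩ := ((h_upper_lim.eventually (eventually_lt_nhds ha)).and h_small).exists
    exact (h_bounds ε hε').mono fun y hy ↦ hy.2.trans_lt hε

lemma tendsto_setIntegral_Ioi_comp_sub_left (hk : Integrable k) :
    Tendsto (fun y ↦ ∫ u in Set.Ioi (0 : ℝ), k (y - u)) atTop (𝓝 (∫ v, k v)) := by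
  have h_reflect : ∀ y, ∫ u in Set.Ioi (0 : ℝ), k (y - u) = ∫ v in Set.Iio y, k v := fun y ↦ by
    rw [← integral_indicator measurableSet_Ioi, ← integral_indicator measurableSet_Iio,
      ← integral_sub_left_eq_self _ volume y]
    refine integral_congr_ae (ae_of_all _ fun v ↦ ?_)
    simp [Set.indicator]
  simp_rw [h_reflect]
  exact (aecover_Iio tendsto_id).integral_tendsto_of_countably_generated hk

lemma tendsto_integral_mul_fejerKernel_of_laplace (h0 : ∀ u, 0 ≤ A u) (hC : ∀ u, A u ≤ C)
    (hmono : Monotone fun u ↦ A u * exp u) (hA : ∀ u < 0, A u = 0) {K : ℂ → ℂ}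
    (hK : ContinuousOn K {z | 0 ≤ z.re})
    (hAK : ∀ z : ℂ, 0 < z.re →
      ∫ u in Set.Ioi (0 : ℝ), ((A u - c : ℝ) : ℂ) * Complex.exp (-z * u) = K z)
    {R : ℝ} (hR : 0 < R) :
    Tendsto (fun y ↦ ∫ v, A (y - v) * fejerKernel R v) atTop (𝓝 (c * ∫ v, fejerKernel 1 v)) := by
  have h_meas := measurable_of_monotone_mul_exp hmono
  have h_fluct : Tendsto (fun y ↦ ∫ u in Set.Ioi (0 : ℝ), (A u - c) * fejerKernel R (y - u))
      atTop (𝓝 0) := by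
    have h_complex := tendsto_integral_mul_fejerKernel (B := fun u ↦ ((A u - c : ℝ) : ℂ))
      (C := C + |c|) (by fun_prop) (fun u ↦ ?_) hR hK hAK
    · simp_rw [← Complex.ofReal_mul, integral_complex_ofReal] at h_complex
      exact tendsto_ofReal_iff.mp (by simpa using h_complex)
    · rw [Complex.norm_real]
      refine (norm_sub_le _ _).trans (add_le_add_left ?_ _)
      rw [norm_of_nonneg (h0 u)]
      exact hC u
  have h_main := (tendsto_setIntegral_Ioi_comp_sub_left (integrable_fejerKernel hR)).const_mul c
  rw [integral_fejerKernel hR] at h_main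
  refine ((zero_add (c * _)) ▸ h_fluct.add h_main).congr fun y ↦ ?_
  have h_shift : Integrable fun u ↦ fejerKernel R (y - u) :=
    (integrable_fejerKernel hR).comp_sub_left y
  have h_prod : Integrable fun u ↦ A u * fejerKernel R (y - u) :=
    h_shift.bdd_mul (c := C) h_meas.aestronglyMeasurable
      (ae_of_all _ fun u ↦ by rw [norm_of_nonneg (h0 _)]; exact hC _)
  calc (∫ u in Set.Ioi (0 : ℝ), (A u - c) * fejerKernel R (y - u))
        + c * ∫ u in Set.Ioi (0 : ℝ), fejerKernel R (y - u)
      = ∫ u in Set.Ioi (0 : ℝ), A u * fejerKernel R (y - u) := by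
        simp_rw [sub_mul]
        rw [integral_sub h_prod.restrict (h_shift.const_mul c).restrict, integral_const_mul,
          sub_add_cancel]
    _ = ∫ u, A u * fejerKernel R (y - u) := by
        rw [← integral_Ici_eq_integral_Ioi]
        refine setIntegral_eq_integral_of_forall_compl_eq_zero fun u hu ↦ ?_
        rw [hA u (lt_of_not_ge hu), zero_mul]
    _ = ∫ v, A (y - v) * fejerKernel R v := by
        rw [← integral_sub_left_eq_self _ volume y]
        simp_rw [sub_sub_cancel]

/-- The Wiener–Ikehara Tauberian theorem for Laplace transforms. -/
theorem tendsto_of_laplace_sub_continuousOn (h0 : ∀ u, 0 ≤ A u) (hC : ∀ u, A u ≤ C)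
    (hmono : Monotone fun u ↦ A u * exp u) (hA : ∀ u < 0, A u = 0) {K : ℂ → ℂ}
    (hK : ContinuousOn K {z | 0 ≤ z.re})
    (hAK : ∀ z : ℂ, 0 < z.re →
      ∫ u in Set.Ioi (0 : ℝ), ((A u - c : ℝ) : ℂ) * Complex.exp (-z * u) = K z) :
    Tendsto A atTop (𝓝 c) := by
  have h_mass := integral_fejerKernel_pos
  refine tendsto_of_tendsto_integral_kernel h0 hC hmono fun ε hε ↦ ?_
  obtain ⟨R, hRε, hR⟩ := (((tendsto_intervalIntegral_fejerKernel hε.1).eventually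
    (eventually_ge_nhds (mul_lt_of_lt_one_left h_mass (sub_lt_self 1 hε.1)))).and
    (eventually_gt_atTop 0)).exists
  refine ⟨fun v ↦ fejerKernel R v / ∫ v, fejerKernel 1 v,
    (integrable_fejerKernel hR).div_const _,
    fun v ↦ div_nonneg (fejerKernel_nonneg hR.le v) h_mass.le, ?_, ?_, ?_⟩
  · rw [integral_div, integral_fejerKernel hR, div_self h_mass.ne']
  · rwa [intervalIntegral.integral_div, le_div_iff₀ h_mass]
  · simp_rw [← mul_div_assoc, integral_div]
    simpa [h_mass.ne'] using
      (tendsto_integral_mul_fejerKernel_of_laplace h0 hC hmono hA hK hAK hR).div_const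
        (∫ v, fejerKernel 1 v)

end WienerIkehara

section WienerIkeharaDirichlet

open Real MeasureTheory Filter Topology

variable {a : ℕ → ℝ} {C c : ℝ}

lemma sum_Icc_floor_nonneg (h0 : ∀ n, 0 ≤ a n) (t : ℝ) : 0 ≤ ∑ k ∈ Finset.Icc 1 ⌊t⌋₊, a k :=
  Finset.sum_nonneg fun k _ ↦ h0 k

lemma monotone_sum_Icc_floor (h0 : ∀ n, 0 ≤ a n) :
    Monotone fun t : ℝ ↦ ∑ k ∈ Finset.Icc 1 ⌊t⌋₊, a k := fun _ _ hst ↦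
  Finset.sum_le_sum_of_subset_of_nonneg (Finset.Icc_subset_Icc_right (Nat.floor_mono hst))
    fun k _ _ ↦ h0 k

lemma sum_Icc_floor_exp_mul_exp_neg_le (h0 : ∀ n, 0 ≤ a n)
    (hC : ∀ n : ℕ, ∑ k ∈ Finset.Icc 1 n, a k ≤ C * n) (u : ℝ) :
    (∑ k ∈ Finset.Icc 1 ⌊exp u⌋₊, a k) * exp (-u) ≤ C := by
  have hC0 : 0 ≤ C := by simpa using (sum_Icc_floor_nonneg h0 1).trans (hC ⌊(1 : ℝ)⌋₊)
  rw [exp_neg, ← div_eq_mul_inv, div_le_iff₀ (exp_pos u)]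
  exact (hC _).trans (mul_le_mul_of_nonneg_left (Nat.floor_le (exp_pos u).le) hC0)

lemma integral_sum_Icc_floor_mul_cpow (a : ℕ → ℝ) (z : ℂ) :
    ∫ t in Set.Ioi (1 : ℝ), (∑ k ∈ Finset.Icc 1 ⌊t⌋₊, (a k : ℂ)) * t ^ (-((1 + z) + 1))
      = ∫ u in Set.Ioi (0 : ℝ), (((∑ k ∈ Finset.Icc 1 ⌊exp u⌋₊, a k) * exp (-u) : ℝ) : ℂ)
          * Complex.exp (-z * u) := by
  rw [← exp_zero, ← integral_comp_exp_Ioi]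
  refine integral_congr_ae (ae_of_all _ fun u ↦ ?_)
  have h_cpow : ((exp u : ℝ) : ℂ) ^ (-((1 + z) + 1)) = Complex.exp (-(2 + z) * u) := by
    rw [Complex.cpow_def_of_ne_zero (by simp), ← Complex.ofReal_log (exp_pos u).le, log_exp]
    ring_nf
  have h_exp : Complex.exp u * Complex.exp (-(2 + z) * u)
      = Complex.exp (-u) * Complex.exp (-z * u) := by
    rw [← Complex.exp_add, ← Complex.exp_add]
    ring_nf
  simp only [h_cpow, Complex.real_smul]
  push_cast
  linear_combination (∑ k ∈ Finset.Icc 1 ⌊exp u⌋₊, (a k : ℂ)) * h_exp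

lemma LSeries_eq_mul_laplace (h0 : ∀ n, 0 ≤ a n)
    (hC : ∀ n : ℕ, ∑ k ∈ Finset.Icc 1 n, a k ≤ C * n) {z : ℂ} (hz : 0 < z.re) :
    LSeries (fun n ↦ (a n : ℂ)) (1 + z)
      = (1 + z) * ∫ u in Set.Ioi (0 : ℝ),
          (((∑ k ∈ Finset.Icc 1 ⌊exp u⌋₊, a k) * exp (-u) : ℝ) : ℂ) * Complex.exp (-z * u) := by
  rw [← integral_sum_Icc_floor_mul_cpow]
  refine LSeries_eq_mul_integral_of_nonneg a zero_le_one (by simpa using hz)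
    (Asymptotics.IsBigO.of_bound C (Eventually.of_forall fun n ↦ ?_)) h0
  rw [norm_of_nonneg (Finset.sum_nonneg fun k _ ↦ h0 k)]
  simpa using hC n

/-- The Wiener–Ikehara Tauberian theorem for Dirichlet series. -/
theorem tendsto_sum_div_of_LSeries_sub_continuousOn (h0 : ∀ n, 0 ≤ a n)
    (hC : ∀ n : ℕ, ∑ k ∈ Finset.Icc 1 n, a k ≤ C * n) {G : ℂ → ℂ}
    (hG : ContinuousOn G {s | 1 ≤ s.re})
    (hGa : ∀ s : ℂ, 1 < s.re → G s = LSeries (fun n ↦ (a n : ℂ)) s - c / (s - 1)) :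
    Tendsto (fun n : ℕ ↦ (∑ k ∈ Finset.Icc 1 n, a k) / n) atTop (𝓝 c) := by
  set A : ℝ → ℝ := fun u ↦ (∑ k ∈ Finset.Icc 1 ⌊exp u⌋₊, a k) * exp (-u) with hA
  have hA0 : ∀ u, 0 ≤ A u := fun u ↦ mul_nonneg (sum_Icc_floor_nonneg h0 _) (exp_pos _).le
  have hAC : ∀ u, A u ≤ C := sum_Icc_floor_exp_mul_exp_neg_le h0 hC
  have hA_mono : Monotone fun u ↦ A u * exp u := by
    simp only [hA, mul_assoc, ← exp_add, neg_add_cancel, exp_zero, mul_one]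
    exact (monotone_sum_Icc_floor h0).comp exp_monotone
  have hA_neg : ∀ u < 0, A u = 0 := fun u hu ↦ by
    simp only [hA, Nat.floor_eq_zero.mpr (exp_lt_one_iff.mpr hu), Finset.Icc_eq_empty (by norm_num :
      ¬ 1 ≤ 0), Finset.sum_empty, zero_mul]
  have h_ne : ∀ z : ℂ, 0 ≤ z.re → 1 + z ≠ 0 := fun z hz h ↦ by
    have h_re : 1 + z.re = 0 := by simpa using congrArg Complex.re h
    linarith
  have h_lim : Tendsto A atTop (𝓝 c) := by
    refine tendsto_of_laplace_sub_continuousOn hA0 hAC hA_mono hA_neg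
      (K := fun z ↦ (G (1 + z) - c) / (1 + z)) ?_ fun z hz ↦ ?_
    · exact ((hG.comp (by fun_prop) fun z hz ↦ by simpa using hz).sub continuousOn_const).div
        (by fun_prop) h_ne
    · have h_neg : (-z).re < 0 := by simpa using hz
      have h_exp : IntegrableOn (fun u : ℝ ↦ Complex.exp (-z * u)) (Set.Ioi 0) :=
        integrableOn_exp_mul_complex_Ioi h_neg 0
      have h_bdd : IntegrableOn (fun u ↦ (A u : ℂ) * Complex.exp (-z * u)) (Set.Ioi 0) :=
        Integrable.bdd_mul (c := C) h_exp
          (Complex.measurable_ofReal.comp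
            (measurable_of_monotone_mul_exp hA_mono)).aestronglyMeasurable
          (ae_of_all _ fun u ↦ by
            rw [Complex.norm_real, norm_of_nonneg (hA0 u)]
            exact hAC u)
      have hz0 : z ≠ 0 := by
        rintro rfl
        simp at hz
      have hz1 := h_ne z hz.le
      simp only [Complex.ofReal_sub, sub_mul]
      rw [integral_sub h_bdd (h_exp.const_mul _), integral_const_mul,
        integral_exp_mul_complex_Ioi h_neg, hGa _ (by simpa using hz),
        LSeries_eq_mul_laplace h0 hC hz, add_sub_cancel_left]
      simp only [Complex.ofReal_zero, mul_zero, Complex.exp_zero]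
      field_simp
      ring
  refine (h_lim.comp (tendsto_log_atTop.comp tendsto_natCast_atTop_atTop)).congr' ?_
  filter_upwards [eventually_gt_atTop 0] with n hn
  simp only [hA, Function.comp_apply, exp_neg, exp_log (Nat.cast_pos.mpr hn), Nat.floor_natCast,
    div_eq_mul_inv]

end WienerIkeharaDirichlet

section PrimesInArithmeticProgressions

open Filter Topology Asymptotics
open ArithmeticFunction (vonMangoldt vonMangoldt_nonneg vonMangoldt_apply_prime)
open ArithmeticFunction.vonMangoldt (residueClass residueClass_nonneg residueClass_le
  LFunctionResidueClassAux continuousOn_LFunctionResidueClassAux eqOn_LFunctionResidueClassAux)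

variable {𝕜 : Type*} [RCLike 𝕜] {q : ℕ}

/-- The Chebyshev function `∑_{p ≤ n} h(p) log p` weighted by `h`. -/
noncomputable def weightedTheta (h : ℕ → 𝕜) (n : ℕ) : 𝕜 :=
  ∑ p ∈ Finset.Icc 1 n with p.Prime, h p * (Real.log p : 𝕜)

/-- `h` has mean value `β` over the primes when each prime `p` is weighted by `log p`. -/
def HasPrimeMean (h : ℕ → 𝕜) (β : 𝕜) : Prop :=
  Tendsto (fun n : ℕ ↦ weightedTheta h n / n) atTop (𝓝 β)

lemma HasPrimeMean.ofReal {h : ℕ → ℝ} {α : ℝ} (hα : HasPrimeMean h α) :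
    HasPrimeMean (fun n ↦ (h n : 𝕜)) α := by
  refine ((RCLike.continuous_ofReal.tendsto α).comp hα).congr fun n ↦ ?_
  simp [weightedTheta]

lemma HasPrimeMean.congr {h h' : ℕ → 𝕜} {β : 𝕜} (hβ : HasPrimeMean h β)
    (h_eq : ∀ p, p.Prime → h p = h' p) : HasPrimeMean h' β := by
  refine Tendsto.congr (fun n ↦ ?_) hβ
  simp only [weightedTheta]
  congr 1
  refine Finset.sum_congr rfl fun p hp ↦ ?_
  rw [h_eq p (Finset.mem_filter.mp hp).2]

lemma hasPrimeMean_sum {ι : Type*} {s : Finset ι} {h : ι → ℕ → 𝕜} {β : ι → 𝕜} (c : ι → 𝕜)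
    (hβ : ∀ i ∈ s, HasPrimeMean (h i) (β i)) :
    HasPrimeMean (fun n ↦ ∑ i ∈ s, c i * h i n) (∑ i ∈ s, c i * β i) := by
  refine (tendsto_finsetSum s fun i hi ↦ (hβ i hi).const_mul (c i)).congr fun n ↦ ?_
  simp only [weightedTheta, mul_div_assoc', ← Finset.sum_div, Finset.mul_sum, Finset.sum_mul,
    mul_assoc]
  rw [Finset.sum_comm]

lemma hasPrimeMean_zero_of_support_subset (s : Finset ℕ) {h : ℕ → 𝕜}
    (hs : ∀ p, p.Prime → p ∉ s → h p = 0) : HasPrimeMean h 0 := by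
  refine (tendsto_const_div_atTop_nhds_zero_nat
    (∑ p ∈ s with p.Prime, h p * (Real.log p : 𝕜))).congr' ?_
  filter_upwards [eventually_ge_atTop (s.sup id)] with n hn
  congr 1
  refine Finset.sum_subset (fun p hp ↦ ?_) fun p hp hps ↦ ?_
  · rw [Finset.mem_filter] at hp ⊢
    exact ⟨Finset.mem_Icc.mpr ⟨hp.2.one_le, (Finset.le_sup (f := id) hp.1).trans hn⟩, hp.2⟩
  · rw [Finset.mem_filter] at hp hps
    rw [hs p hp.2 fun h ↦ hps ⟨h, hp.2⟩, zero_mul]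

lemma tendsto_sum_residueClass_div [NeZero q] {a : ZMod q} (ha : IsUnit a) :
    Tendsto (fun n : ℕ ↦ (∑ k ∈ Finset.Icc 1 n, residueClass a k) / n) atTop
      (𝓝 (q.totient : ℝ)⁻¹) := by
  have h_chebyshev (n : ℕ) :
      ∑ k ∈ Finset.Icc 1 n, residueClass a k ≤ (Real.log 4 + 4) * n :=
    calc ∑ k ∈ Finset.Icc 1 n, residueClass a k
        ≤ ∑ k ∈ Finset.Icc 1 n, vonMangoldt k := Finset.sum_le_sum fun k _ ↦ residueClass_le a k
      _ = Chebyshev.psi n := by rw [Chebyshev.psi, Nat.floor_natCast]; rfl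
      _ ≤ (Real.log 4 + 4) * n := Chebyshev.psi_le_const_mul_self n.cast_nonneg
  refine tendsto_sum_div_of_LSeries_sub_continuousOn (residueClass_nonneg a) h_chebyshev
    (continuousOn_LFunctionResidueClassAux a) fun s hs ↦ ?_
  simpa using eqOn_LFunctionResidueClassAux ha hs

lemma abs_sum_residueClass_sub_le (a : ZMod q) (n : ℕ) :
    |∑ k ∈ Finset.Icc 1 n, residueClass a k
        - weightedTheta (fun k ↦ if (k : ZMod q) = a then (1 : ℝ) else 0) n|
      ≤ Chebyshev.psi n - Chebyshev.theta n := by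
  have h_psi : Chebyshev.psi n - Chebyshev.theta n
      = ∑ k ∈ Finset.Icc 1 n, (vonMangoldt k - if k.Prime then Real.log k else 0) := by
    rw [Chebyshev.psi, Chebyshev.theta, Nat.floor_natCast, Finset.sum_sub_distrib,
      Finset.sum_filter]
    rfl
  rw [h_psi, weightedTheta, Finset.sum_filter, ← Finset.sum_sub_distrib]
  refine (Finset.abs_sum_le_sum_abs _ _).trans (Finset.sum_le_sum fun k _ ↦ ?_)
  have h_nonneg : 0 ≤ vonMangoldt k - if k.Prime then Real.log k else 0 := by
    split_ifs with hk
    · rw [vonMangoldt_apply_prime hk, sub_self]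
    · rw [sub_zero]
      exact vonMangoldt_nonneg
  by_cases hka : (k : ZMod q) = a
  · simp only [residueClass, Set.indicator_apply, Set.mem_ofPred_eq, hka, if_true, one_mul]
    exact (abs_of_nonneg h_nonneg).le
  · simpa [residueClass, Set.indicator_apply, hka] using h_nonneg

lemma tendsto_psi_sub_theta_div :
    Tendsto (fun n : ℕ ↦ (Chebyshev.psi n - Chebyshev.theta n) / n) atTop (𝓝 0) := by
  have h_sqrt : (Real.sqrt : ℝ → ℝ) =o[atTop] (id : ℝ → ℝ) := by
    refine isLittleO_of_tendsto (fun x hx ↦ by simp_all) ?_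
    simpa [Real.sqrt_div_self, Function.comp_def] using
      tendsto_inv_atTop_zero.comp Real.tendsto_sqrt_atTop
  exact ((Chebyshev.isBigO_psi_sub_theta_sqrt.trans_isLittleO h_sqrt).tendsto_div_nhds_zero).comp
    tendsto_natCast_atTop_atTop

lemma hasPrimeMean_residueClass_of_isUnit [NeZero q] {a : ZMod q} (ha : IsUnit a) :
    HasPrimeMean (fun n ↦ if (n : ZMod q) = a then (1 : ℝ) else 0) (q.totient : ℝ)⁻¹ := by
  have h_diff : Tendsto (fun n : ℕ ↦ (∑ k ∈ Finset.Icc 1 n, residueClass a k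
      - weightedTheta (fun k ↦ if (k : ZMod q) = a then (1 : ℝ) else 0) n) / n)
      atTop (𝓝 0) := by
    refine squeeze_zero_norm (fun n ↦ ?_) tendsto_psi_sub_theta_div
    rw [norm_div, RCLike.norm_natCast]
    gcongr
    exact abs_sum_residueClass_sub_le a n
  have h_sub := (tendsto_sum_residueClass_div ha).sub h_diff
  rw [sub_zero] at h_sub
  refine h_sub.congr fun n ↦ ?_
  simp [sub_div]

lemma hasPrimeMean_residueClass_of_not_isUnit [NeZero q] {a : ZMod q} (ha : ¬ IsUnit a) :
    HasPrimeMean (fun n ↦ if (n : ZMod q) = a then (1 : ℝ) else 0) 0 := by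
  refine hasPrimeMean_zero_of_support_subset q.primeFactors fun p hp hpq ↦ if_neg ?_
  rintro rfl
  refine ha ((ZMod.isUnit_iff_coprime p q).mpr ((Nat.Prime.coprime_iff_not_dvd hp).mpr fun h ↦ ?_))
  exact hpq (Nat.mem_primeFactors.mpr ⟨hp, h, NeZero.ne q⟩)

/-- The prime number theorem in arithmetic progressions. -/
theorem hasPrimeMean_zmod [NeZero q] (H : ZMod q → 𝕜) :
    HasPrimeMean (fun n ↦ H n) ((q.totient : 𝕜)⁻¹ * ∑ u : (ZMod q)ˣ, H u) := by
  classical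
  have h_class (a : ZMod q) : HasPrimeMean (fun n ↦ ((if (n : ZMod q) = a then 1 else 0 : ℝ) : 𝕜))
      ((if IsUnit a then (q.totient : ℝ)⁻¹ else 0 : ℝ) : 𝕜) := by
    split_ifs with ha
    · exact (hasPrimeMean_residueClass_of_isUnit ha).ofReal
    · exact (hasPrimeMean_residueClass_of_not_isUnit ha).ofReal
  convert hasPrimeMean_sum H fun a (_ : a ∈ Finset.univ) ↦ h_class a using 1
  · ext n
    simp
  · rw [Finset.mul_sum]
    refine Fintype.sum_of_injective _ Units.val_injective _ _ (fun a ha ↦ ?_) fun u ↦ ?_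
    · rw [if_neg fun h : IsUnit a ↦ ha h, RCLike.ofReal_zero, mul_zero]
    · simp [mul_comm]

end PrimesInArithmeticProgressions

section SummatoryFunctions

open Finset Filter Topology Asymptotics

variable {𝕜 : Type*} [RCLike 𝕜] {h : ℕ → 𝕜} {g : ℕ → ℝ}

/-- The summatory function `∑_{n ≤ x} h(n)`. -/
def summatory (h : ℕ → 𝕜) (x : ℕ) : 𝕜 := ∑ n ∈ Icc 1 x, h n

/-- The logarithmic summatory function `∑_{n ≤ x} h(n) / n`. -/
noncomputable def logSummatory (h : ℕ → 𝕜) (x : ℕ) : 𝕜 := ∑ n ∈ Icc 1 x, h n / n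

lemma summatory_nonneg (hg : ∀ n, 0 ≤ g n) (x : ℕ) : 0 ≤ summatory g x :=
  sum_nonneg fun n _ ↦ hg n

lemma logSummatory_nonneg (hg : ∀ n, 0 ≤ g n) (x : ℕ) : 0 ≤ logSummatory g x :=
  sum_nonneg fun n _ ↦ div_nonneg (hg n) n.cast_nonneg

lemma logSummatory_le_summatory (hg : ∀ n, 0 ≤ g n) (x : ℕ) :
    logSummatory g x ≤ summatory g x :=
  sum_le_sum fun n hn ↦ div_le_self (hg n) (by exact_mod_cast (mem_Icc.mp hn).1)

lemma norm_logSummatory_le_of_norm_le (hle : ∀ n, ‖h n‖ ≤ g n) (x : ℕ) :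
    ‖logSummatory h x‖ ≤ logSummatory g x := by
  refine (norm_sum_le _ _).trans (sum_le_sum fun n _ ↦ ?_)
  rw [norm_div, RCLike.norm_natCast]
  gcongr
  exact hle n

lemma one_le_logSummatory (hg : ∀ n, 0 ≤ g n) (hg1 : g 1 = 1) {x : ℕ} (hx : 1 ≤ x) :
    1 ≤ logSummatory g x :=
  calc (1 : ℝ) = g 1 / (1 : ℕ) := by simp [hg1]
    _ ≤ logSummatory g x := single_le_sum (f := fun n : ℕ ↦ g n / n)
      (fun n _ ↦ div_nonneg (hg n) n.cast_nonneg) (mem_Icc.mpr ⟨le_rfl, hx⟩)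

lemma logSummatory_eq_div_add_sum (h : ℕ → 𝕜) (x : ℕ) :
    logSummatory h x
      = summatory h x / x + ∑ n ∈ range x, summatory h n / ((n : 𝕜) * (n + 1)) := by
  induction x with
  | zero => simp [logSummatory]
  | succ x ih =>
    have h1 : (x : 𝕜) + 1 ≠ 0 := by exact_mod_cast x.succ_ne_zero
    simp only [logSummatory, summatory, sum_Icc_succ_top (Nat.le_add_left 1 x),
      sum_range_succ] at ih ⊢
    rw [ih]
    rcases eq_or_ne x 0 with rfl | hx
    · simp
    · have hx0 : (x : 𝕜) ≠ 0 := by exact_mod_cast hx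
      push_cast
      field_simp
      ring

lemma norm_logSummatory_le_of_norm_summatory_le (hle : ∀ n, ‖summatory h n‖ ≤ summatory g n)
    (x : ℕ) : ‖logSummatory h x‖ ≤ logSummatory g x := by
  rw [logSummatory_eq_div_add_sum h, logSummatory_eq_div_add_sum g]
  refine (norm_add_le _ _).trans (add_le_add ?_ ((norm_sum_le _ _).trans
    (sum_le_sum fun n _ ↦ ?_)))
  · rw [norm_div, RCLike.norm_natCast]
    gcongr
    exact hle x
  · have h_norm : ‖(n : 𝕜) * (n + 1)‖ = (n : ℝ) * (n + 1) := by
      exact_mod_cast RCLike.norm_natCast (K := 𝕜) (n * (n + 1))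
    rw [norm_div, h_norm]
    gcongr
    exact hle n

lemma exists_forall_le_add_of_eventually_le {u v : ℕ → ℝ} (huv : ∀ᶠ n in atTop, u n ≤ v n) :
    ∃ K, 0 ≤ K ∧ ∀ n, u n ≤ v n + K := by
  have h_bdd : IsBoundedUnder (· ≤ ·) atTop (u - v) :=
    isBoundedUnder_of_eventually_le (a := 0) (huv.mono fun n hn ↦ sub_nonpos.mpr hn)
  obtain ⟨K, hK⟩ := h_bdd.bddAbove_range
  refine ⟨max K 0, le_max_right _ _, fun n ↦ ?_⟩
  have h_le : u n - v n ≤ K := hK ⟨n, rfl⟩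
  linarith [le_max_left K 0]

lemma logSummatory_ite_eq_one_le {K : ℝ} (hK : 0 ≤ K) (x : ℕ) :
    logSummatory (fun n ↦ if n = 1 then K else 0) x ≤ K := by
  simp only [logSummatory, ite_div, zero_div, sum_ite_eq']
  split_ifs <;> simp [hK]

/-- Logarithmic averaging preserves a bound on the ratio of two summatory functions, at the cost
of an arbitrarily small increase of the constant. -/
lemma isBigOWith_logSummatory (hg : ∀ n, 0 ≤ g n) (hg_log : Tendsto (logSummatory g) atTop atTop)
    {θ ρ : ℝ} (hθρ : θ < ρ) (hle : IsBigOWith θ atTop (summatory h) (summatory g)) :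
    IsBigOWith ρ atTop (logSummatory h) (logSummatory g) := by
  obtain ⟨K, hK, h_le⟩ := exists_forall_le_add_of_eventually_le hle.bound
  -- the constant `K` is absorbed into the first term of the majorant
  set a : ℕ → ℝ := fun n ↦ θ * g n + if n = 1 then K else 0 with ha
  have h_sum : ∀ n, ‖summatory h n‖ ≤ summatory a n := fun n ↦ by
    rcases Nat.eq_zero_or_pos n with rfl | hn
    · simp [summatory]
    · have h_eq : summatory a n = θ * summatory g n + K := by
        simp [summatory, ha, sum_add_distrib, mul_sum, Nat.one_le_iff_ne_zero.mp hn]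
      simpa [h_eq, Real.norm_of_nonneg (summatory_nonneg hg n)] using h_le n
  have h_log (x : ℕ) : logSummatory a x
      = θ * logSummatory g x + logSummatory (fun n ↦ if n = 1 then K else 0) x := by
    simp only [logSummatory, ha, add_div, sum_add_distrib, mul_sum, mul_div_assoc]
  refine IsBigOWith.of_bound ?_
  filter_upwards [hg_log.eventually_ge_atTop (K / (ρ - θ))] with x hx
  rw [div_le_iff₀ (sub_pos.mpr hθρ)] at hx
  rw [Real.norm_of_nonneg (logSummatory_nonneg hg x)]
  calc ‖logSummatory h x‖ ≤ logSummatory a x := norm_logSummatory_le_of_norm_summatory_le h_sum x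
    _ ≤ θ * logSummatory g x + K := by
      rw [h_log]
      gcongr
      exact logSummatory_ite_eq_one_le hK x
    _ ≤ ρ * logSummatory g x := by linarith

lemma sum_sum_divisorsAntidiagonal {M : Type*} [AddCommMonoid M] (f : ℕ → ℕ → M) (x : ℕ) :
    ∑ n ∈ Icc 1 x, ∑ p ∈ n.divisorsAntidiagonal, f p.1 p.2
      = ∑ d ∈ Icc 1 x, ∑ m ∈ Icc 1 (x / d), f d m := by
  rw [sum_sigma', sum_sigma']
  refine sum_nbij' (fun s ↦ ⟨s.2.1, s.2.2⟩) (fun s ↦ ⟨s.1 * s.2, (s.1, s.2)⟩) ?_ ?_ ?_ ?_ ?_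
  · rintro ⟨n, d, m⟩ hs
    simp only [mem_sigma, mem_Icc, Nat.mem_divisorsAntidiagonal] at hs ⊢
    obtain ⟨⟨hn, hnx⟩, rfl, -⟩ := hs
    have hd : 0 < d := Nat.pos_of_mul_pos_right hn
    have hm : 0 < m := Nat.pos_of_mul_pos_left hn
    exact ⟨⟨hd, (Nat.le_mul_of_pos_right d hm).trans hnx⟩, hm,
      (Nat.le_div_iff_mul_le hd).mpr (by rwa [mul_comm])⟩
  · rintro ⟨d, m⟩ hs
    simp only [mem_sigma, mem_Icc] at hs
    simp only [mem_sigma, mem_Icc, Nat.mem_divisorsAntidiagonal]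
    obtain ⟨⟨hd, -⟩, hm, hmx⟩ := hs
    have hdm : 0 < d * m := Nat.mul_pos hd hm
    exact ⟨⟨hdm, (Nat.mul_le_mul_left d hmx).trans (Nat.mul_div_le x d)⟩, trivial, hdm.ne'⟩
  · rintro ⟨n, d, m⟩ hs
    simp only [mem_sigma, Nat.mem_divisorsAntidiagonal] at hs
    obtain ⟨-, rfl, -⟩ := hs
    rfl
  · rintro ⟨d, m⟩ -
    rfl
  · exact fun _ _ ↦ rfl

lemma sum_Icc_sum_Icc_div_comm {M : Type*} [AddCommMonoid M] (f : ℕ → ℕ → M) (x : ℕ) :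
    ∑ d ∈ Icc 1 x, ∑ m ∈ Icc 1 (x / d), f d m = ∑ m ∈ Icc 1 x, ∑ d ∈ Icc 1 (x / m), f d m := by
  have h_mem (d m : ℕ) : d ∈ Icc 1 x ∧ m ∈ Icc 1 (x / d) ↔ 1 ≤ d ∧ 1 ≤ m ∧ m * d ≤ x := by
    simp only [mem_Icc]
    constructor
    · rintro ⟨⟨hd, -⟩, hm, hmx⟩
      exact ⟨hd, hm, (Nat.le_div_iff_mul_le hd).mp hmx⟩
    · rintro ⟨hd, hm, hmx⟩
      exact ⟨⟨hd, (Nat.le_mul_of_pos_left d hm).trans hmx⟩, hm,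
        (Nat.le_div_iff_mul_le hd).mpr hmx⟩
  refine sum_comm' fun d m ↦ ?_
  rw [h_mem, and_comm (a := d ∈ _), h_mem, mul_comm]
  tauto

end SummatoryFunctions

section MultiplicativeMeanValues

open Finset Filter Topology Asymptotics
open ArithmeticFunction (vonMangoldt vonMangoldt_nonneg vonMangoldt_apply_prime vonMangoldt_sum)
open ArithmeticFunction.vonMangoldt (residueClass summable_residueClass_non_primes_div)

variable {𝕜 : Type*} [RCLike 𝕜] {h : ℕ → 𝕜} {g : ℕ → ℝ} {E E₁ E₂ : ℕ → 𝕜} {α : ℝ} {β : 𝕜}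

/-- `h` is multiplicative and majorized by `g ≤ 1`, where `g 1 = 1`. Used both for a weight `g`
over itself and for its twists by characters. -/
structure IsMajorizedMultiplicative (h : ℕ → 𝕜) (g : ℕ → ℝ) : Prop where
  map_mul : ∀ m n : ℕ, m.Coprime n → h (m * n) = h m * h n
  norm_le : ∀ n, ‖h n‖ ≤ g n
  le_one : ∀ n, g n ≤ 1
  map_one : g 1 = 1

namespace IsMajorizedMultiplicative

lemma nonneg (hm : IsMajorizedMultiplicative h g) (n : ℕ) : 0 ≤ g n :=
  (norm_nonneg _).trans (hm.norm_le n)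

lemma norm_le_one (hm : IsMajorizedMultiplicative h g) (n : ℕ) : ‖h n‖ ≤ 1 :=
  (hm.norm_le n).trans (hm.le_one n)

lemma le_mul_logSummatory (hm : IsMajorizedMultiplicative h g) (x : ℕ) :
    (x : ℝ) ≤ x * logSummatory g x := by
  rcases Nat.eq_zero_or_pos x with rfl | hx
  · simp
  · exact le_mul_of_one_le_right x.cast_nonneg (one_le_logSummatory hm.nonneg hm.map_one hx)

end IsMajorizedMultiplicative

/-- `E(x) = o(x ∑_{n ≤ x} g(n) / n) + O(∑_{n ≤ x} g(n))`, the size of the error terms that occur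
in comparing `∑_{n ≤ x} h(n) log x` with `x ∑_{n ≤ x} h(n) / n` when `|h| ≤ g`. -/
def IsNegligible (g : ℕ → ℝ) (E : ℕ → 𝕜) : Prop :=
  ∀ ε > 0, ∃ C, ∀ x : ℕ, ‖E x‖ ≤ ε * (x * logSummatory g x) + C * summatory g x

lemma IsNegligible.add (h₁ : IsNegligible g E₁) (h₂ : IsNegligible g E₂) :
    IsNegligible g (E₁ + E₂) := fun ε hε ↦ by
  obtain ⟨C₁, hC₁⟩ := h₁ (ε / 2) (half_pos hε)
  obtain ⟨C₂, hC₂⟩ := h₂ (ε / 2) (half_pos hε)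
  refine ⟨C₁ + C₂, fun x ↦ (norm_add_le _ _).trans ?_⟩
  linarith [hC₁ x, hC₂ x]

lemma isNegligible_sum_mul (hle : ∀ n, ‖h n‖ ≤ g n) {r : ℕ → ℕ → 𝕜}
    (hr : ∀ ε > 0, ∃ C, ∀ x n, 1 ≤ n → n ≤ x → ‖r x n‖ ≤ ε * (x / n) + C) :
    IsNegligible g fun x ↦ ∑ n ∈ Icc 1 x, h n * r x n := fun ε hε ↦ by
  obtain ⟨C, hC⟩ := hr ε hε
  refine ⟨C, fun x ↦ (norm_sum_le _ _).trans ?_⟩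
  rw [logSummatory, summatory, mul_sum, mul_sum, mul_sum, ← sum_add_distrib]
  refine sum_le_sum fun n hn ↦ ?_
  obtain ⟨hn1, hnx⟩ := mem_Icc.mp hn
  calc ‖h n * r x n‖ ≤ g n * (ε * (x / n) + C) := by
        rw [norm_mul]
        exact mul_le_mul (hle n) (hC x n hn1 hnx) (norm_nonneg _) ((norm_nonneg _).trans (hle n))
    _ = ε * (x * (g n / n)) + C * g n := by ring

/-- If the `d`-th term of a sum is `O_d(∑_{n ≤ x} g(n))` and `O(x b(d))` with `b` summable, then
the first bound is used on a finite set of `d` and the second on the tail. -/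
lemma isNegligible_of_norm_le_sum (hg : ∀ n, 0 ≤ g n)
    (hx : ∀ x : ℕ, (x : ℝ) ≤ x * logSummatory g x) {e : ℕ → ℕ → ℝ} {c b : ℕ → ℝ}
    (hE : ∀ x, ‖E x‖ ≤ ∑ d ∈ Icc 1 x, e x d) (hc0 : ∀ d, 0 ≤ c d)
    (hc : ∀ x d, 1 ≤ d → e x d ≤ c d * summatory g x)
    (hb0 : ∀ d, 0 ≤ b d) (hb : ∀ x d : ℕ, 1 ≤ d → e x d ≤ x * b d) (hb_sum : Summable b) :
    IsNegligible g E := fun ε hε ↦ by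
  obtain ⟨s, hs⟩ := summable_iff_vanishing_norm.mp hb_sum ε hε
  refine ⟨∑ d ∈ s, c d, fun x ↦ (hE x).trans ?_⟩
  rw [← sum_filter_add_sum_filter_not (Icc 1 x) (· ∈ s), add_comm]
  refine add_le_add ?_ ?_
  · have h_tail : ∑ d ∈ Icc 1 x with d ∉ s, b d ≤ ε := by
      refine (Real.le_norm_self _).trans (hs _ (disjoint_left.mpr fun d hd ↦ ?_)).le
      exact (mem_filter.mp hd).2
    calc ∑ d ∈ Icc 1 x with d ∉ s, e x d ≤ ∑ d ∈ Icc 1 x with d ∉ s, x * b d :=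
          sum_le_sum fun d hd ↦ hb x d (mem_Icc.mp (mem_filter.mp hd).1).1
      _ = x * ∑ d ∈ Icc 1 x with d ∉ s, b d := (mul_sum _ _ _).symm
      _ ≤ x * logSummatory g x * ε :=
        mul_le_mul (hx x) h_tail (sum_nonneg fun d _ ↦ hb0 d)
          (mul_nonneg x.cast_nonneg (logSummatory_nonneg hg x))
      _ = ε * (x * logSummatory g x) := mul_comm _ _
  · calc ∑ d ∈ Icc 1 x with d ∈ s, e x d ≤ ∑ d ∈ Icc 1 x with d ∈ s, c d * summatory g x :=
          sum_le_sum fun d hd ↦ hc x d (mem_Icc.mp (mem_filter.mp hd).1).1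
      _ ≤ ∑ d ∈ s, c d * summatory g x :=
        sum_le_sum_of_subset_of_nonneg (fun d hd ↦ (mem_filter.mp hd).2)
          fun d _ _ ↦ mul_nonneg (hc0 d) (summatory_nonneg hg x)
      _ = (∑ d ∈ s, c d) * summatory g x := (sum_mul _ _ _).symm

/-- The tail weight in the comparison of `log` with its restriction to primes: a prime `d` only
contributes through the multiples of `d ^ 2`. -/
noncomputable def convolutionTail (d : ℕ) : ℝ :=
  (if d.Prime then 0 else vonMangoldt d) / d + vonMangoldt d / d ^ 2

lemma convolutionTail_nonneg (d : ℕ) : 0 ≤ convolutionTail d := by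
  have := vonMangoldt_nonneg (n := d)
  unfold convolutionTail
  split_ifs <;> positivity

lemma summable_convolutionTail : Summable convolutionTail := by
  refine Summable.add ?_ ?_
  · refine (summable_residueClass_non_primes_div (1 : ZMod 1)).congr fun d ↦ ?_
    simp [residueClass, Subsingleton.elim (d : ZMod 1) 1]
  · refine (ArithmeticFunction.LSeriesSummable_vonMangoldt (s := 2) (by norm_num)).norm.congr
      fun d ↦ ?_
    rcases eq_or_ne d 0 with rfl | hd
    · simp
    · rw [LSeries.term_of_ne_zero hd, norm_div, Complex.norm_real,
        Real.norm_of_nonneg vonMangoldt_nonneg, Complex.cpow_ofNat, norm_pow, Complex.norm_natCast]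

/-- The failure `h(dm) - h_P(d) h(m)` of multiplicativity, where `h_P` is the restriction of `h`
to the primes. -/
def primeDefect (h : ℕ → 𝕜) (d m : ℕ) : 𝕜 := h (d * m) - (if d.Prime then h d else 0) * h m

lemma sum_mul_log_sub_sum_mul_weightedTheta (h : ℕ → 𝕜) (x : ℕ) :
    ∑ n ∈ Icc 1 x, h n * (Real.log n : 𝕜) - ∑ m ∈ Icc 1 x, h m * weightedTheta h (x / m)
      = ∑ d ∈ Icc 1 x, (vonMangoldt d : 𝕜) * ∑ m ∈ Icc 1 (x / d), primeDefect h d m := by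
  have h_log : ∑ n ∈ Icc 1 x, h n * (Real.log n : 𝕜)
      = ∑ d ∈ Icc 1 x, ∑ m ∈ Icc 1 (x / d), (vonMangoldt d : 𝕜) * h (d * m) := by
    rw [← sum_sum_divisorsAntidiagonal fun d m ↦ (vonMangoldt d : 𝕜) * h (d * m)]
    refine sum_congr rfl fun n _ ↦ ?_
    rw [← vonMangoldt_sum, RCLike.ofReal_sum, mul_sum,
      Nat.sum_divisorsAntidiagonal fun d m ↦ (vonMangoldt d : 𝕜) * h (d * m)]
    refine sum_congr rfl fun d hd ↦ ?_
    rw [Nat.mul_div_cancel' (Nat.dvd_of_mem_divisors hd), mul_comm]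
  have h_theta : ∑ m ∈ Icc 1 x, h m * weightedTheta h (x / m) = ∑ d ∈ Icc 1 x,
      ∑ m ∈ Icc 1 (x / d), (vonMangoldt d : 𝕜) * ((if d.Prime then h d else 0) * h m) := by
    rw [sum_Icc_sum_Icc_div_comm]
    refine sum_congr rfl fun m _ ↦ ?_
    rw [weightedTheta, sum_filter, mul_sum]
    refine sum_congr rfl fun d _ ↦ ?_
    split_ifs with hd
    · rw [vonMangoldt_apply_prime hd]
      ring
    · ring
  rw [h_log, h_theta, ← sum_sub_distrib]
  refine sum_congr rfl fun d _ ↦ ?_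
  rw [← sum_sub_distrib, mul_sum]
  exact sum_congr rfl fun m _ ↦ (mul_sub _ _ _).symm

lemma sum_Icc_div_comp_mul_left_le (hg : ∀ n, 0 ≤ g n) (x : ℕ) {d : ℕ} (hd : 1 ≤ d) :
    ∑ m ∈ Icc 1 (x / d), g (d * m) ≤ summatory g x := by
  rw [← sum_image (s := Icc 1 (x / d)) (g := (d * ·)) (f := g)
    (mul_right_injective₀ (Nat.one_le_iff_ne_zero.mp hd)).injOn]
  refine sum_le_sum_of_subset_of_nonneg (fun n hn ↦ ?_) fun n _ _ ↦ hg n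
  simp only [mem_image, mem_Icc] at hn ⊢
  obtain ⟨m, ⟨hm, hmx⟩, rfl⟩ := hn
  exact ⟨Nat.mul_pos hd hm, (Nat.mul_le_mul_left d hmx).trans (Nat.mul_div_le x d)⟩

namespace IsMajorizedMultiplicative

lemma norm_ite_prime_le_one (hm : IsMajorizedMultiplicative h g) (d : ℕ) :
    ‖if d.Prime then h d else 0‖ ≤ 1 := by
  split_ifs
  · exact hm.norm_le_one d
  · simp

lemma norm_primeDefect_le_add (hm : IsMajorizedMultiplicative h g) (d m : ℕ) :
    ‖primeDefect h d m‖ ≤ g (d * m) + g m := by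
  refine (norm_sub_le _ _).trans (add_le_add (hm.norm_le _) ?_)
  rw [norm_mul]
  exact (mul_le_of_le_one_left (norm_nonneg _) (hm.norm_ite_prime_le_one d)).trans (hm.norm_le m)

lemma norm_primeDefect_le_two (hm : IsMajorizedMultiplicative h g) (d m : ℕ) :
    ‖primeDefect h d m‖ ≤ 2 := by
  linarith [hm.norm_primeDefect_le_add d m, hm.le_one (d * m), hm.le_one m]

lemma primeDefect_eq_zero (hm : IsMajorizedMultiplicative h g) {p m : ℕ} (hp : p.Prime)
    (hpm : ¬ p ∣ m) : primeDefect h p m = 0 := by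
  rw [primeDefect, if_pos hp, hm.map_mul p m (hp.coprime_iff_not_dvd.mpr hpm), sub_self]

lemma norm_sum_primeDefect_le_summatory (hm : IsMajorizedMultiplicative h g) (x : ℕ) {d : ℕ}
    (hd : 1 ≤ d) : ‖∑ m ∈ Icc 1 (x / d), primeDefect h d m‖ ≤ 2 * summatory g x :=
  calc ‖∑ m ∈ Icc 1 (x / d), primeDefect h d m‖
      ≤ ∑ m ∈ Icc 1 (x / d), (g (d * m) + g m) :=
        (norm_sum_le _ _).trans (sum_le_sum fun m _ ↦ hm.norm_primeDefect_le_add d m)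
    _ ≤ summatory g x + summatory g x := by
        rw [sum_add_distrib]
        refine add_le_add (sum_Icc_div_comp_mul_left_le hm.nonneg x hd) ?_
        exact sum_le_sum_of_subset_of_nonneg (Icc_subset_Icc_right (Nat.div_le_self x d))
          fun n _ _ ↦ hm.nonneg n
    _ = 2 * summatory g x := (two_mul _).symm

lemma norm_sum_primeDefect_le_div (hm : IsMajorizedMultiplicative h g) (x d : ℕ) :
    ‖∑ m ∈ Icc 1 (x / d), primeDefect h d m‖ ≤ 2 * (x / d) :=
  calc ‖∑ m ∈ Icc 1 (x / d), primeDefect h d m‖ ≤ ∑ _m ∈ Icc 1 (x / d), (2 : ℝ) :=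
        (norm_sum_le _ _).trans (sum_le_sum fun _ _ ↦ hm.norm_primeDefect_le_two d _)
    _ = 2 * ((x / d : ℕ) : ℝ) := by simp [mul_comm]
    _ ≤ 2 * (x / d) := by
        gcongr
        exact Nat.cast_div_le

lemma norm_sum_primeDefect_le_div_sq (hm : IsMajorizedMultiplicative h g) (x : ℕ) {p : ℕ}
    (hp : p.Prime) : ‖∑ m ∈ Icc 1 (x / p), primeDefect h p m‖ ≤ 2 * (x / p ^ 2) :=
  calc ‖∑ m ∈ Icc 1 (x / p), primeDefect h p m‖
      ≤ ∑ m ∈ Ioc 0 (x / p), if p ∣ m then (2 : ℝ) else 0 := by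
        refine (norm_sum_le _ _).trans (sum_le_sum fun m _ ↦ ?_)
        split_ifs with hpm
        · exact hm.norm_primeDefect_le_two p m
        · rw [hm.primeDefect_eq_zero hp hpm, norm_zero]
    _ = 2 * ((x / p / p : ℕ) : ℝ) := by
        rw [← sum_filter, sum_const, nsmul_eq_mul, Nat.Ioc_filter_dvd_card_eq_div, mul_comm]
    _ ≤ 2 * (x / p ^ 2) := by
        rw [Nat.div_div_eq_div_mul, ← sq, ← Nat.cast_pow]
        gcongr
        exact Nat.cast_div_le

lemma vonMangoldt_mul_norm_sum_primeDefect_le (hm : IsMajorizedMultiplicative h g) (x d : ℕ) :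
    vonMangoldt d * ‖∑ m ∈ Icc 1 (x / d), primeDefect h d m‖ ≤ x * (2 * convolutionTail d) := by
  have := vonMangoldt_nonneg (n := d)
  by_cases hd : d.Prime
  · calc vonMangoldt d * ‖∑ m ∈ Icc 1 (x / d), primeDefect h d m‖
        ≤ vonMangoldt d * (2 * (x / d ^ 2)) := by
          gcongr
          exact hm.norm_sum_primeDefect_le_div_sq x hd
      _ = x * (2 * convolutionTail d) := by
          rw [convolutionTail, if_pos hd]
          ring
  · calc vonMangoldt d * ‖∑ m ∈ Icc 1 (x / d), primeDefect h d m‖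
        ≤ vonMangoldt d * (2 * (x / d)) := by
          gcongr
          exact hm.norm_sum_primeDefect_le_div x d
      _ = x * (2 * (vonMangoldt d / d)) := by ring
      _ ≤ x * (2 * convolutionTail d) := by
          rw [convolutionTail, if_neg hd]
          gcongr
          exact le_add_of_nonneg_right (by positivity)

lemma isNegligible_sum_mul_log_sub_sum_mul_weightedTheta (hm : IsMajorizedMultiplicative h g) :
    IsNegligible g fun x ↦ ∑ n ∈ Icc 1 x, h n * (Real.log n : 𝕜)
      - ∑ m ∈ Icc 1 x, h m * weightedTheta h (x / m) := by
  refine isNegligible_of_norm_le_sum (c := fun d ↦ vonMangoldt d * 2)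
    (b := fun d ↦ 2 * convolutionTail d)
    (e := fun x d ↦ vonMangoldt d * ‖∑ m ∈ Icc 1 (x / d), primeDefect h d m‖)
    hm.nonneg hm.le_mul_logSummatory (fun x ↦ ?_)
    (fun d ↦ mul_nonneg vonMangoldt_nonneg zero_le_two) (fun x d hd ↦ ?_)
    (fun d ↦ mul_nonneg zero_le_two (convolutionTail_nonneg d))
    (fun x d _ ↦ hm.vonMangoldt_mul_norm_sum_primeDefect_le x d)
    (summable_convolutionTail.mul_left 2)
  · rw [sum_mul_log_sub_sum_mul_weightedTheta]
    refine (norm_sum_le _ _).trans (sum_le_sum fun d _ ↦ ?_)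
    rw [norm_mul, RCLike.norm_of_nonneg vonMangoldt_nonneg]
  · rw [mul_assoc]
    exact mul_le_mul_of_nonneg_left (hm.norm_sum_primeDefect_le_summatory x hd) vonMangoldt_nonneg

end IsMajorizedMultiplicative

lemma isNegligible_summatory_mul_log_sub_sum_mul_log (hle : ∀ n, ‖h n‖ ≤ g n) :
    IsNegligible g fun x ↦ summatory h x * (Real.log x : 𝕜)
      - ∑ n ∈ Icc 1 x, h n * (Real.log n : 𝕜) := by
  have h_eq : (fun x ↦ summatory h x * (Real.log x : 𝕜) - ∑ n ∈ Icc 1 x, h n * (Real.log n : 𝕜))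
      = fun x ↦ ∑ n ∈ Icc 1 x, h n * ((Real.log x - Real.log n : ℝ) : 𝕜) := by
    ext x
    simp only [summatory, sum_mul, ← sum_sub_distrib, RCLike.ofReal_sub, mul_sub]
  rw [h_eq]
  refine isNegligible_sum_mul hle fun ε hε ↦ ⟨-Real.log ε, fun x n hn hnx ↦ ?_⟩
  have hn0 : (0 : ℝ) < n := Nat.cast_pos.mpr hn
  have hx0 : (0 : ℝ) < x := Nat.cast_pos.mpr (hn.trans hnx)
  have h_mono : Real.log n ≤ Real.log x := Real.log_le_log hn0 (Nat.cast_le.mpr hnx)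
  have h_log := Real.log_le_sub_one_of_pos (mul_pos hε (div_pos hx0 hn0))
  rw [Real.log_mul hε.ne' (div_pos hx0 hn0).ne', Real.log_div hx0.ne' hn0.ne'] at h_log
  rw [RCLike.norm_of_nonneg (sub_nonneg.mpr h_mono)]
  linarith

lemma HasPrimeMean.exists_norm_weightedTheta_sub_le (hβ : HasPrimeMean h β) {ε : ℝ} (hε : 0 < ε) :
    ∃ C, 0 ≤ C ∧ ∀ n : ℕ, ‖weightedTheta h n - β * n‖ ≤ ε * n + C := by
  refine exists_forall_le_add_of_eventually_le ?_
  filter_upwards [Metric.tendsto_nhds.mp hβ ε hε, eventually_gt_atTop 0] with n hn hn0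
  have hn_pos : (0 : ℝ) < n := Nat.cast_pos.mpr hn0
  have hn_ne : (n : 𝕜) ≠ 0 := Nat.cast_ne_zero.mpr hn0.ne'
  rw [dist_eq_norm, div_sub' hn_ne, norm_div, RCLike.norm_natCast, div_lt_iff₀ hn_pos] at hn
  rw [mul_comm β]
  exact hn.le

lemma HasPrimeMean.isNegligible_sum_mul_weightedTheta_sub (hβ : HasPrimeMean h β)
    (hle : ∀ n, ‖h n‖ ≤ g n) :
    IsNegligible g fun x ↦ ∑ m ∈ Icc 1 x, h m * weightedTheta h (x / m)
      - β * x * logSummatory h x := by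
  have h_eq : (fun x : ℕ ↦ ∑ m ∈ Icc 1 x, h m * weightedTheta h (x / m)
      - β * x * logSummatory h x)
      = fun x : ℕ ↦ ∑ m ∈ Icc 1 x, h m * (weightedTheta h (x / m) - β * (x / m)) := by
    ext x
    rw [logSummatory, mul_sum, ← sum_sub_distrib]
    exact sum_congr rfl fun m _ ↦ by ring
  rw [h_eq]
  refine isNegligible_sum_mul hle fun ε hε ↦ ?_
  obtain ⟨C, -, hC⟩ := hβ.exists_norm_weightedTheta_sub_le hε
  refine ⟨C + ‖β‖, fun x n hn _ ↦ ?_⟩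
  have h_floor : ((x / n : ℕ) : ℝ) ≤ x / n := Nat.cast_div_le
  have h_fract : ‖((x / n : ℕ) : 𝕜) - x / n‖ ≤ 1 := by
    have h_cast : ((x / n : ℕ) : 𝕜) - x / n = ((⌊(x : ℝ) / n⌋₊ - x / n : ℝ) : 𝕜) := by
      rw [Nat.floor_div_eq_div]
      push_cast
      rfl
    rw [h_cast, RCLike.norm_ofReal, abs_sub_le_iff]
    constructor <;> linarith [Nat.floor_le (by positivity : (0 : ℝ) ≤ x / n),
      Nat.lt_floor_add_one ((x : ℝ) / n)]
  calc ‖weightedTheta h (x / n) - β * (x / n)‖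
      = ‖(weightedTheta h (x / n) - β * (x / n : ℕ)) + β * (((x / n : ℕ) : 𝕜) - x / n)‖ := by
        congr 1
        ring
    _ ≤ (ε * (x / n : ℕ) + C) + ‖β‖ * 1 := by
        refine (norm_add_le _ _).trans (add_le_add (hC _) ?_)
        rw [norm_mul]
        gcongr
    _ ≤ ε * (x / n) + (C + ‖β‖) := by
        rw [mul_one, add_assoc]
        gcongr

/-- Write `log n = ∑_{d ∣ n} Λ(d)` and use that `h(dm) = h(d) h(m)` for most pairs `(d, m)`. -/
lemma IsMajorizedMultiplicative.isNegligible_summatory_mul_log_sub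
    (hm : IsMajorizedMultiplicative h g) (hβ : HasPrimeMean h β) :
    IsNegligible g fun x ↦ summatory h x * (Real.log x : 𝕜) - β * x * logSummatory h x := by
  convert ((isNegligible_summatory_mul_log_sub_sum_mul_log hm.norm_le).add
    hm.isNegligible_sum_mul_log_sub_sum_mul_weightedTheta).add
    (hβ.isNegligible_sum_mul_weightedTheta_sub hm.norm_le) using 1
  ext x
  simp only [Pi.add_apply]
  ring

lemma IsMajorizedMultiplicative.summatory_isLittleO_mul_logSummatory
    (hm : IsMajorizedMultiplicative g g) (hα : HasPrimeMean g α) :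
    summatory g =o[atTop] fun x : ℕ ↦ x * logSummatory g x := by
  obtain ⟨C, hC⟩ := hm.isNegligible_summatory_mul_log_sub hα 1 one_pos
  refine isLittleO_iff.mpr fun c hc ↦ ?_
  have h_log : Tendsto (fun x : ℕ ↦ Real.log x) atTop atTop :=
    Real.tendsto_log_atTop.comp tendsto_natCast_atTop_atTop
  filter_upwards [h_log.eventually_ge_atTop (C + (|α| + 1) / c)] with x hx
  have hS := summatory_nonneg hm.nonneg x
  have hL := mul_nonneg x.cast_nonneg (logSummatory_nonneg hm.nonneg x)
  rw [Real.norm_of_nonneg hS, Real.norm_of_nonneg hL]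
  have h_upper : summatory g x * Real.log x ≤
      (|α| + 1) * (x * logSummatory g x) + C * summatory g x := by
    have h_abs := (le_abs_self _).trans (hC x)
    have h_main := mul_le_mul_of_nonneg_right (le_abs_self α) hL
    simp only [RCLike.ofReal_real_eq_id, id_eq] at h_abs
    linarith
  have h_lower := mul_le_mul_of_nonneg_left hx hS
  rw [← mul_le_mul_iff_right₀ (by positivity : 0 < (|α| + 1) / c)]
  calc (|α| + 1) / c * summatory g x ≤ (|α| + 1) * (x * logSummatory g x) := by linarith
    _ = (|α| + 1) / c * (c * (x * logSummatory g x)) := by field_simp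

lemma IsNegligible.isLittleO (hE : IsNegligible g E)
    (hg : summatory g =o[atTop] fun x : ℕ ↦ x * logSummatory g x) :
    E =o[atTop] fun x : ℕ ↦ x * logSummatory g x := by
  refine isLittleO_iff.mpr fun c hc ↦ ?_
  obtain ⟨C, hC⟩ := hE (c / 2) (half_pos hc)
  filter_upwards [(hg.const_mul_left C).bound (half_pos hc)] with x hx
  have h_abs := mul_le_mul_of_nonneg_left (le_abs_self (x * logSummatory g x)) (half_pos hc).le
  rw [Real.norm_eq_abs, Real.norm_eq_abs] at hx
  rw [Real.norm_eq_abs]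
  linarith [hC x, le_abs_self (C * summatory g x)]

lemma IsMajorizedMultiplicative.isLittleO_summatory_mul_log_sub
    (hm : IsMajorizedMultiplicative h g) (hgm : IsMajorizedMultiplicative g g)
    (hα : HasPrimeMean g α) (hβ : HasPrimeMean h β) :
    (fun x : ℕ ↦ summatory h x * (Real.log x : 𝕜) - β * x * logSummatory h x)
      =o[atTop] fun x : ℕ ↦ x * logSummatory g x :=
  (hm.isNegligible_summatory_mul_log_sub hβ).isLittleO (hgm.summatory_isLittleO_mul_logSummatory hα)

lemma IsMajorizedMultiplicative.eventually_le_summatory_mul_log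
    (hm : IsMajorizedMultiplicative g g) (hα : HasPrimeMean g α) {γ : ℝ} (hγ : γ < α) :
    ∀ᶠ x : ℕ in atTop, γ * (x * logSummatory g x) ≤ summatory g x * Real.log x := by
  filter_upwards [(hm.isLittleO_summatory_mul_log_sub hm hα hα).bound (sub_pos.mpr hγ)] with x hx
  rw [Real.norm_of_nonneg (mul_nonneg x.cast_nonneg (logSummatory_nonneg hm.nonneg x)),
    RCLike.ofReal_real_eq_id, id_eq] at hx
  linarith [neg_le_of_abs_le hx]

lemma not_summable_inv_mul_log : ¬ Summable fun n : ℕ ↦ ((n : ℝ) * Real.log n)⁻¹ := by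
  rw [← summable_condensed_iff_of_eventually_nonneg]
  · have h_eq : (fun k : ℕ ↦ (2 : ℝ) ^ k * (((2 ^ k : ℕ) : ℝ) * Real.log (2 ^ k : ℕ))⁻¹)
        = fun k : ℕ ↦ (Real.log 2)⁻¹ * (k : ℝ)⁻¹ := by
      ext k
      push_cast
      rw [Real.log_pow]
      field_simp
    rw [h_eq, summable_mul_left_iff (inv_ne_zero (Real.log_pos one_lt_two).ne')]
    exact Real.not_summable_natCast_inv
  · exact Eventually.of_forall fun n ↦
      inv_nonneg.mpr (mul_nonneg n.cast_nonneg (Real.log_natCast_nonneg n))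
  · filter_upwards [eventually_ge_atTop 2] with n hn
    have hn' : (1 : ℝ) < n := by exact_mod_cast hn
    have h_log := Real.log_pos hn'
    gcongr <;> exact n.le_succ

lemma IsMajorizedMultiplicative.tendsto_logSummatory_atTop
    (hm : IsMajorizedMultiplicative g g) (hα : HasPrimeMean g α) (h0 : 0 < α) :
    Tendsto (logSummatory g) atTop atTop := by
  have h_nonneg (n : ℕ) : 0 ≤ summatory g n / ((n : ℝ) * (n + 1)) :=
    div_nonneg (summatory_nonneg hm.nonneg n) (by positivity)
  have h_bigO : (fun n : ℕ ↦ ((n : ℝ) * Real.log n)⁻¹)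
      =O[atTop] fun n : ℕ ↦ summatory g n / ((n : ℝ) * (n + 1)) := by
    refine IsBigO.of_bound (4 / α) ?_
    filter_upwards [hm.eventually_le_summatory_mul_log hα (half_lt_self h0),
      eventually_ge_atTop 2] with n hn hn2
    have hn1 : (1 : ℝ) < n := by exact_mod_cast hn2
    have h_log := Real.log_pos hn1
    have h_le := hm.le_mul_logSummatory n
    rw [Real.norm_of_nonneg (by positivity), Real.norm_of_nonneg (h_nonneg n), mul_div_assoc',
      inv_eq_one_div, div_le_div_iff₀ (by positivity) (by positivity)]
    have h_sum : (n : ℝ) ≤ 2 / α * (summatory g n * Real.log n) := by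
      rw [← div_le_iff₀' (by positivity), div_div_eq_mul_div]
      nlinarith
    have h_mul := mul_le_mul_of_nonneg_left h_sum (by positivity : (0 : ℝ) ≤ 2 * n)
    calc 1 * ((n : ℝ) * (n + 1)) ≤ 2 * n * n := by nlinarith
      _ ≤ 2 * n * (2 / α * (summatory g n * Real.log n)) := h_mul
      _ = 4 / α * summatory g n * (n * Real.log n) := by ring
  have h_sum : Tendsto (fun x ↦ ∑ n ∈ range x, summatory g n / ((n : ℝ) * (n + 1)))
      atTop atTop :=
    (not_summable_iff_tendsto_nat_atTop_of_nonneg h_nonneg).mp fun hs ↦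
      not_summable_inv_mul_log (summable_of_isBigO_nat hs h_bigO)
  refine tendsto_atTop_mono (fun x ↦ ?_) h_sum
  rw [logSummatory_eq_div_add_sum]
  exact le_add_of_nonneg_left (div_nonneg (summatory_nonneg hm.nonneg x) x.cast_nonneg)

lemma IsMajorizedMultiplicative.tendsto_summatory_atTop
    (hm : IsMajorizedMultiplicative g g) (hα : HasPrimeMean g α) (h0 : 0 < α) :
    Tendsto (summatory g) atTop atTop :=
  tendsto_atTop_mono (logSummatory_le_summatory hm.nonneg) (hm.tendsto_logSummatory_atTop hα h0)

lemma IsMajorizedMultiplicative.isBigOWith_summatory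
    (hm : IsMajorizedMultiplicative h g) (hgm : IsMajorizedMultiplicative g g)
    (hα : HasPrimeMean g α) (hβ : HasPrimeMean h β) {θ ρ : ℝ} (hθ : 0 < θ)
    (hρθ : ‖β‖ * ρ < θ * α) (hle : IsBigOWith ρ atTop (logSummatory h) (logSummatory g)) :
    IsBigOWith θ atTop (summatory h) (summatory g) := by
  set ε := (θ * α - ‖β‖ * ρ) / (1 + θ) with hε
  have hε0 : 0 < ε := div_pos (sub_pos.mpr hρθ) (by positivity)
  have h_split : ‖β‖ * ρ + ε = θ * (α - ε) := by
    rw [hε]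
    field_simp
    ring
  refine IsBigOWith.of_bound ?_
  filter_upwards [hle.bound, (hm.isLittleO_summatory_mul_log_sub hgm hα hβ).bound hε0,
    hgm.eventually_le_summatory_mul_log hα (sub_lt_self α hε0), eventually_ge_atTop 2]
    with x h_logs h_err h_lower hx2
  have h_log : 0 < Real.log x := Real.log_pos (by exact_mod_cast hx2)
  have hL := logSummatory_nonneg hm.nonneg x
  rw [Real.norm_of_nonneg hL] at h_logs
  rw [Real.norm_of_nonneg (mul_nonneg x.cast_nonneg hL)] at h_err
  rw [Real.norm_of_nonneg (summatory_nonneg hm.nonneg x)]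
  refine le_of_mul_le_mul_right ?_ h_log
  calc ‖summatory h x‖ * Real.log x = ‖summatory h x * (Real.log x : 𝕜)‖ := by
        rw [norm_mul, RCLike.norm_of_nonneg h_log.le]
    _ ≤ ‖β * x * logSummatory h x‖ + ε * (x * logSummatory g x) := by
        linarith [norm_sub_norm_le (summatory h x * (Real.log x : 𝕜)) (β * x * logSummatory h x)]
    _ ≤ ‖β‖ * x * (ρ * logSummatory g x) + ε * (x * logSummatory g x) := by
        rw [norm_mul, norm_mul, RCLike.norm_natCast]
        gcongr
    _ = (‖β‖ * ρ + ε) * (x * logSummatory g x) := by ring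
    _ = θ * ((α - ε) * (x * logSummatory g x)) := by rw [h_split, mul_assoc]
    _ ≤ θ * (summatory g x * Real.log x) := by gcongr
    _ = θ * summatory g x * Real.log x := (mul_assoc _ _ _).symm

/-- Each passage from the logarithmic to the plain summatory functions and back improves the bound
on the ratio by a factor arbitrarily close to `‖β‖ / α < 1`. -/
theorem IsMajorizedMultiplicative.summatory_isLittleO
    (hm : IsMajorizedMultiplicative h g) (hgm : IsMajorizedMultiplicative g g)
    (hα : HasPrimeMean g α) (hβ : HasPrimeMean h β) (hlt : ‖β‖ < α) :
    summatory h =o[atTop] summatory g := by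
  have h0 : 0 < α := (norm_nonneg β).trans_lt hlt
  obtain ⟨r, hβr, hr1⟩ := exists_between ((div_lt_one h0).mpr hlt)
  obtain ⟨s, hrs, hs1⟩ := exists_between hr1
  have hr0 : 0 < r := (by positivity : 0 ≤ ‖β‖ / α).trans_lt hβr
  have hs0 : 0 < s := hr0.trans hrs
  rw [div_lt_iff₀ h0] at hβr
  have h_step {ρ : ℝ} (hρ : 0 < ρ)
      (hle : IsBigOWith ρ atTop (logSummatory h) (logSummatory g)) :
      IsBigOWith (r * ρ) atTop (summatory h) (summatory g) := by
    refine hm.isBigOWith_summatory hgm hα hβ (mul_pos hr0 hρ) ?_ hle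
    rw [mul_right_comm]
    gcongr
  have h_pow (k : ℕ) : IsBigOWith (s ^ k) atTop (logSummatory h) (logSummatory g) := by
    induction k with
    | zero =>
      refine IsBigOWith.of_bound (Eventually.of_forall fun x ↦ ?_)
      rw [pow_zero, one_mul]
      exact (norm_logSummatory_le_of_norm_le hm.norm_le x).trans (Real.le_norm_self _)
    | succ k ih =>
      refine isBigOWith_logSummatory hm.nonneg (hgm.tendsto_logSummatory_atTop hα h0) ?_
        (h_step (pow_pos hs0 k) ih)
      rw [pow_succ']
      gcongr
  refine isLittleO_iff_forall_isBigOWith.mpr fun ε hε ↦ ?_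
  obtain ⟨k, hk⟩ := exists_pow_lt_of_lt_one hε hs1
  refine (h_step (pow_pos hs0 k) (h_pow k)).weaken ?_
  exact (mul_le_of_le_one_left (by positivity) hr1.le).trans hk.le

end MultiplicativeMeanValues

section Stepanov

open Polynomial Finset
open scoped Nat

variable {k : Type*} [Field k]

lemma eq_zero_of_mul_derivative_eq {F : k[X]} (hF : IsCoprime F (derivative F)) {n : ℕ}
    (hn : (n ! : k) ≠ 0) {s : k[X]} (hs : F * derivative s = n * derivative F * s)
    (hdeg : s.degree < (n * F.natDegree : ℕ)) : s = 0 := by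
  induction n generalizing s with
  | zero => simpa using hdeg
  | succ n ih =>
    rw [Nat.factorial_succ, Nat.cast_mul, mul_ne_zero_iff] at hn
    have hF0 : F ≠ 0 := by
      rintro rfl
      simpa using hF.ne_zero_or_ne_zero
    have h_dvd : F ∣ s := by
      have h_unit : IsUnit ((n + 1 : ℕ) : k[X]) := by
        rw [← map_natCast C, isUnit_C]
        exact hn.1.isUnit
      have h_mul : F ∣ ((n + 1 : ℕ) : k[X]) * derivative F * s := ⟨_, hs.symm⟩
      rw [mul_assoc, h_unit.dvd_mul_left] at h_mul
      exact hF.dvd_of_dvd_mul_left h_mul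
    obtain ⟨t, rfl⟩ := h_dvd
    have ht : F * derivative t = n * derivative F * t := by
      apply mul_left_cancel₀ hF0
      rw [derivative_mul] at hs
      push_cast at hs
      linear_combination hs
    have ht_deg : t.degree < (n * F.natDegree : ℕ) := by
      rw [degree_mul, degree_eq_natDegree hF0, add_one_mul, add_comm, Nat.cast_add] at hdeg
      exact lt_of_add_lt_add_right hdeg
    rw [ih hn.2 ht ht_deg, mul_zero]

lemma X_sub_C_pow_succ_dvd_of_dvd_mul_derivative_sub {F G A : k[X]} {u : k} {n : ℕ}
    (hn : (n ! : k) ≠ 0) (hF : F.eval u ≠ 0) (hA : A.eval u = 0)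
    (h_dvd : (X - C u) ^ n ∣ F * derivative A - G * A) : (X - C u) ^ (n + 1) ∣ A := by
  induction n with
  | zero => rwa [zero_add, pow_one, dvd_iff_isRoot]
  | succ n ih =>
    rw [Nat.factorial_succ, Nat.cast_mul, mul_ne_zero_iff] at hn
    obtain ⟨B, rfl⟩ := ih hn.2 ((pow_dvd_pow _ n.le_succ).trans h_dvd)
    have h_lead : (X - C u) ^ (n + 1) ∣ (X - C u) ^ n * (((n + 1 : ℕ) : k[X]) * (F * B)) := by
      have h_eq : (X - C u) ^ n * (((n + 1 : ℕ) : k[X]) * (F * B))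
          = F * derivative ((X - C u) ^ (n + 1) * B) - G * ((X - C u) ^ (n + 1) * B)
            - (X - C u) ^ (n + 1) * (F * derivative B - G * B) := by
        simp only [derivative_mul, derivative_X_sub_C_pow, Nat.add_sub_cancel, map_natCast]
        ring
      rw [h_eq]
      exact h_dvd.sub (dvd_mul_right _ _)
    rw [pow_succ, mul_dvd_mul_iff_left (pow_ne_zero n (X_sub_C_ne_zero u))] at h_lead
    have h_root := dvd_iff_isRoot.mp h_lead
    have hB : B.eval u = 0 := by
      simpa only [IsRoot, eval_mul, eval_natCast, mul_eq_zero, hn.1, hF, false_or] using h_root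
    rw [pow_succ]
    exact mul_dvd_mul_left _ (dvd_iff_isRoot.mpr hB)

/-- The coefficients `c_j` of Stepanov's auxiliary polynomial. They are determined by `c_0 = c`
and `(j + 1) c_{j+1} = F c_j' - (j + m) F' c_j`. -/
noncomputable def stepanovCoeff (F : k[X]) (m : ℕ) (c : k) : ℕ → k[X]
  | 0 => C c
  | j + 1 => C ((j + 1 : ℕ) : k)⁻¹ * (F * derivative (stepanovCoeff F m c j)
      - (j + m : ℕ) * derivative F * stepanovCoeff F m c j)

/-- Stepanov's auxiliary polynomial `F ^ j (F ^ m - ∑_{i ≤ j} c_i (Z / F) ^ i)`, where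
`c_i = stepanovCoeff F m c i`. For `Z = X ^ ℓ - X` over `𝔽_ℓ` it vanishes to order `j + 1` at all
nonzeros `u` of `F` with `F(u) ^ m = c`. -/
noncomputable def stepanovPoly (F Z : k[X]) (m : ℕ) (c : k) : ℕ → k[X]
  | 0 => F ^ m - C c
  | j + 1 => F * stepanovPoly F Z m c j - stepanovCoeff F m c (j + 1) * Z ^ (j + 1)

lemma natCast_mul_stepanovCoeff_succ (F : k[X]) (m : ℕ) (c : k) {j : ℕ}
    (hj : ((j + 1 : ℕ) : k) ≠ 0) :
    ((j + 1 : ℕ) : k[X]) * stepanovCoeff F m c (j + 1) = F * derivative (stepanovCoeff F m c j)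
      - (j + m : ℕ) * derivative F * stepanovCoeff F m c j := by
  rw [stepanovCoeff, ← map_natCast C (j + 1), ← mul_assoc, ← C_mul, mul_inv_cancel₀ hj, C_1,
    one_mul]

lemma mul_derivative_stepanovPoly_sub {F Z : k[X]} (hZ : derivative Z = -1) (m : ℕ) (c : k)
    {j : ℕ} (hj : ((j + 1)! : k) ≠ 0) :
    F * derivative (stepanovPoly F Z m c j) - (j + m : ℕ) * derivative F * stepanovPoly F Z m c j
      = -(((j + 1 : ℕ) : k[X]) * stepanovCoeff F m c (j + 1) * Z ^ j) := by
  induction j with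
  | zero =>
    rw [natCast_mul_stepanovCoeff_succ F m c (by simp)]
    rcases m with _ | m
    · simp [stepanovPoly, stepanovCoeff]
    · simp only [stepanovPoly, stepanovCoeff, derivative_sub, derivative_C, derivative_pow_succ]
      simp only [map_add, map_natCast, map_one]
      push_cast
      ring
  | succ j ih =>
    rw [Nat.factorial_succ, Nat.cast_mul, mul_ne_zero_iff] at hj
    rw [natCast_mul_stepanovCoeff_succ F m c hj.1]
    simp only [stepanovPoly, derivative_sub, derivative_mul, derivative_pow_succ, hZ]
    have ih' := ih hj.2
    simp only [map_add, map_natCast, map_one]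
    push_cast at ih' ⊢
    linear_combination F * ih'

lemma natDegree_stepanovCoeff_le (F : k[X]) (m : ℕ) (c : k) (j : ℕ) :
    (stepanovCoeff F m c j).natDegree ≤ j * (F.natDegree - 1) := by
  induction j with
  | zero => simp [stepanovCoeff]
  | succ j ih =>
    have h_left : (F * derivative (stepanovCoeff F m c j)).natDegree
        ≤ (j + 1) * (F.natDegree - 1) := by
      rcases Nat.eq_zero_or_pos (stepanovCoeff F m c j).natDegree with h0 | h0
      · simp [derivative_of_natDegree_zero h0]
      · have h_pred := natDegree_derivative_le (stepanovCoeff F m c j)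
        have hF : 0 < F.natDegree - 1 := Nat.pos_of_mul_pos_left (h0.trans_le ih)
        refine natDegree_mul_le.trans ?_
        rw [add_one_mul]
        omega
    have h_right : (((j + m : ℕ) : k[X]) * derivative F * stepanovCoeff F m c j).natDegree
        ≤ (j + 1) * (F.natDegree - 1) := by
      rw [add_one_mul, add_comm (j * _)]
      refine natDegree_mul_le.trans (add_le_add ?_ ih)
      rw [← map_natCast C]
      exact (natDegree_C_mul_le _ _).trans (natDegree_derivative_le F)
    rw [stepanovCoeff]
    exact (natDegree_C_mul_le _ _).trans ((natDegree_sub_le _ _).trans (max_le h_left h_right))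

lemma natDegree_stepanovPoly_le (F Z : k[X]) (m : ℕ) (c : k) (j : ℕ) :
    (stepanovPoly F Z m c j).natDegree
      ≤ j * F.natDegree + max (m * F.natDegree) (j * Z.natDegree) := by
  induction j with
  | zero => simp [stepanovPoly]
  | succ j ih =>
    rw [stepanovPoly]
    refine (natDegree_sub_le _ _).trans (max_le ?_ ?_)
    · rw [add_one_mul, add_comm (j * _), add_assoc]
      refine natDegree_mul_le.trans (add_le_add_right (ih.trans ?_) _)
      gcongr
      exact j.le_succ
    · refine natDegree_mul_le.trans (add_le_add ?_ (natDegree_pow_le.trans (le_max_right _ _)))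
      exact (natDegree_stepanovCoeff_le F m c _).trans (Nat.mul_le_mul_left _ (Nat.sub_le _ _))

lemma X_sub_C_pow_dvd_stepanovPoly {F Z : k[X]} (hZ : derivative Z = -1) {m : ℕ} {c u : k}
    (hZu : Z.eval u = 0) (hFu : F.eval u ≠ 0) (hu : F.eval u ^ m = c) {j : ℕ}
    (hj : ((j + 1)! : k) ≠ 0) : (X - C u) ^ (j + 1) ∣ stepanovPoly F Z m c j := by
  have h_eval : (stepanovPoly F Z m c j).eval u = 0 := by
    clear hj
    induction j with
    | zero => simp [stepanovPoly, hu]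
    | succ j ih => simp [stepanovPoly, ih, hZu]
  have hj' : (j ! : k) ≠ 0 := by
    rw [Nat.factorial_succ, Nat.cast_mul] at hj
    exact right_ne_zero_of_mul hj
  refine X_sub_C_pow_succ_dvd_of_dvd_mul_derivative_sub hj' hFu h_eval
    (G := ((j + m : ℕ) : k[X]) * derivative F) ?_
  rw [mul_derivative_stepanovPoly_sub hZ m c hj, dvd_neg]
  exact (pow_dvd_pow_of_dvd (dvd_iff_isRoot.mpr hZu) j).mul_left _

lemma stepanovCoeff_ne_zero {F : k[X]} (hF : IsCoprime F (derivative F)) (hdeg : 0 < F.natDegree)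
    {m : ℕ} (hm : 1 ≤ m) {c : k} (hc : c ≠ 0) {j : ℕ} (hj : ((j + m)! : k) ≠ 0) :
    stepanovCoeff F m c j ≠ 0 := by
  induction j with
  | zero => simpa [stepanovCoeff] using hc
  | succ j ih =>
    intro h0
    have hj1 : ((j + 1 : ℕ) : k) ≠ 0 := ne_zero_of_dvd_ne_zero hj
      (Nat.cast_dvd_cast (Nat.dvd_factorial j.succ_pos (Nat.le_add_right _ m)))
    have h_ode := natCast_mul_stepanovCoeff_succ F m c hj1
    rw [Nat.succ_add, Nat.factorial_succ, Nat.cast_mul, mul_ne_zero_iff] at hj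
    rw [h0, mul_zero] at h_ode
    refine ih hj.2 (eq_zero_of_mul_derivative_eq hF hj.2 (sub_eq_zero.mp h_ode.symm) ?_)
    refine degree_le_natDegree.trans_lt (Nat.cast_lt.mpr ?_)
    calc (stepanovCoeff F m c j).natDegree ≤ j * (F.natDegree - 1) :=
          natDegree_stepanovCoeff_le F m c j
      _ ≤ j * F.natDegree := Nat.mul_le_mul_left _ (Nat.sub_le _ _)
      _ < (j + m) * F.natDegree := Nat.mul_lt_mul_of_pos_right (Nat.lt_add_of_pos_right hm) hdeg

lemma stepanovPoly_eq_zero {F Z : k[X]} (hZ : derivative Z = -1) {m : ℕ} {c : k} {S : Finset k}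
    (hS : ∀ u ∈ S, Z.eval u = 0 ∧ F.eval u ≠ 0 ∧ F.eval u ^ m = c) {j : ℕ}
    (hj : ((j + 1)! : k) ≠ 0)
    (h_card : j * F.natDegree + max (m * F.natDegree) (j * Z.natDegree) < #S * (j + 1)) :
    stepanovPoly F Z m c j = 0 := by
  have h_dvd : ∏ u ∈ S, (X - C u) ^ (j + 1) ∣ stepanovPoly F Z m c j := by
    refine prod_dvd_of_coprime (fun a _ b _ hab ↦ ?_) fun u hu ↦ ?_
    · exact (isCoprime_X_sub_C_of_isUnit_sub (sub_ne_zero.mpr hab).isUnit).pow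
    · obtain ⟨hZu, hFu, hu⟩ := hS u hu
      exact X_sub_C_pow_dvd_stepanovPoly hZ hZu hFu hu hj
  have h_deg : (∏ u ∈ S, (X - C u) ^ (j + 1)).natDegree = #S * (j + 1) := by
    rw [natDegree_prod _ _ fun u _ ↦ pow_ne_zero _ (X_sub_C_ne_zero u)]
    simp only [natDegree_pow, natDegree_X_sub_C, mul_one, sum_const, smul_eq_mul]
  refine eq_zero_of_dvd_of_natDegree_lt h_dvd ?_
  rw [h_deg]
  exact (natDegree_stepanovPoly_le F Z m c j).trans_lt h_card

lemma card_le_card_filter_eval_ne_zero_add [Fintype k] [DecidableEq k] {F : k[X]} (hF : F ≠ 0) :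
    Fintype.card k ≤ #(univ.filter fun u ↦ u ≠ 0 ∧ F.eval u ≠ 0) + (F.natDegree + 1) := by
  have h_cover : univ ⊆ (univ.filter fun u ↦ u ≠ 0 ∧ F.eval u ≠ 0) ∪ insert 0 F.roots.toFinset :=
    fun u _ ↦ by
      simp only [mem_union, mem_filter_univ, mem_insert, Multiset.mem_toFinset, mem_roots hF,
        IsRoot]
      tauto
  refine (card_le_card h_cover).trans ((card_union_le _ _).trans (Nat.add_le_add_left ?_ _))
  refine (card_insert_le _ _).trans (Nat.add_le_add_right ?_ 1)
  exact (Multiset.toFinset_card_le _).trans F.card_roots'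

/-- Otherwise Stepanov's auxiliary polynomial of index `deg F` would have more roots, counted with
multiplicity, than its degree. It would then vanish, and so would its last coefficient. -/
theorem exists_eval_pow_ne [Fintype k] {F : k[X]} (hF : IsCoprime F (derivative F))
    (hdeg : 0 < F.natDegree) (hk : F.natDegree ^ 2 + (F.natDegree + 1) ^ 2 < Fintype.card k)
    {m : ℕ} (hm : 1 ≤ m) (hm_card : m ≤ Fintype.card k)
    (hm_fact : ((F.natDegree + 1 + m)! : k) ≠ 0) {c : k} (hc : c ≠ 0) :
    ∃ u ≠ 0, F.eval u ≠ 0 ∧ F.eval u ^ m ≠ c := by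
  classical
  by_contra! h_const
  set Z : k[X] := X ^ Fintype.card k - X
  have hZ : derivative Z = -1 := by simp [Z, derivative_X_pow]
  have hZ_deg : Z.natDegree = Fintype.card k :=
    FiniteField.X_pow_card_sub_X_natDegree_eq k Fintype.one_lt_card
  have hd_fact : ((F.natDegree + 1)! : k) ≠ 0 := ne_zero_of_dvd_ne_zero hm_fact
    (Nat.cast_dvd_cast (Nat.factorial_dvd_factorial (Nat.le_add_right _ m)))
  have h_zero : stepanovPoly F Z m c F.natDegree = 0 := by
    refine stepanovPoly_eq_zero hZ (S := univ.filter fun u ↦ u ≠ 0 ∧ F.eval u ≠ 0)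
      (fun u hu ↦ ?_) hd_fact ?_
    · obtain ⟨hu0, hFu⟩ := (mem_filter_univ u).mp hu
      exact ⟨by simp [Z, FiniteField.pow_card], hFu, h_const u hu0 hFu⟩
    · have h_card := card_le_card_filter_eval_ne_zero_add (ne_zero_of_natDegree_gt hdeg)
      rw [hZ_deg, max_eq_right (by nlinarith)]
      nlinarith
  have h_ode := mul_derivative_stepanovPoly_sub (F := F) hZ m c hd_fact
  rw [h_zero, derivative_zero, mul_zero, mul_zero, sub_zero, zero_eq_neg] at h_ode
  have hd_cast : ((F.natDegree + 1 : ℕ) : k[X]) ≠ 0 := by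
    rw [Nat.factorial_succ, Nat.cast_mul] at hd_fact
    rw [← map_natCast C, Ne, C_eq_zero]
    exact left_ne_zero_of_mul hd_fact
  have hZ0 : Z ≠ 0 := ne_zero_of_natDegree_gt (hZ_deg ▸ Fintype.card_pos)
  exact mul_ne_zero (mul_ne_zero hd_cast (stepanovCoeff_ne_zero hF hdeg hm hc hm_fact))
    (pow_ne_zero _ hZ0) h_ode

end Stepanov

section UnitValues

open Filter Finset Polynomial
open scoped Pointwise

section Algebra

variable {A R S : Type*} [CommRing A] [CommRing R] [CommRing S] [Algebra A R] [Algebra A S]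

/-- The set of units of `R` that the polynomial `F` attains at units of `R`. -/
def unitValues (F : A[X]) (R : Type*) [CommRing R] [Algebra A R] : Set Rˣ :=
  {s | ∃ u : Rˣ, aeval (u : R) F = s}

/-- Narkiewicz's criterion: `F` attains a unit at some unit, and the ratios of such values generate
the unit group. For finite `R`, this says that there are unit values and no nontrivial character
of `Rˣ` is constant on them. -/
def UnitValuesGenerate (F : A[X]) (R : Type*) [CommRing R] [Algebra A R] : Prop :=
  (unitValues F R).Nonempty ∧ Subgroup.closure (unitValues F R / unitValues F R) = ⊤

lemma image_unitsMap_unitValues_subset (F : A[X]) (φ : R →ₐ[A] S) :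
    Units.map (φ : R →* S) '' unitValues F R ⊆ unitValues F S := by
  rintro _ ⟨s, ⟨u, hu⟩, rfl⟩
  exact ⟨Units.map (φ : R →* S) u, by simp [aeval_algHom_apply, hu]⟩

lemma image_unitsMap_unitValues (F : A[X]) {φ : R →ₐ[A] S} [IsLocalHom φ]
    (hφ : Function.Surjective (Units.map (φ : R →* S))) :
    Units.map (φ : R →* S) '' unitValues F R = unitValues F S := by
  refine (image_unitsMap_unitValues_subset F φ).antisymm ?_
  rintro s ⟨v, hv⟩
  obtain ⟨u, rfl⟩ := hφ v
  have h_eval : φ (aeval (u : R) F) = s := by rw [← aeval_algHom_apply, ← hv]; rfl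
  have h_unit : IsUnit (aeval (u : R) F) := isUnit_of_map_unit φ _ (h_eval ▸ s.isUnit)
  exact ⟨h_unit.unit, ⟨u, rfl⟩, Units.ext h_eval⟩

lemma UnitValuesGenerate.of_algEquiv {F : A[X]} (h : UnitValuesGenerate F R) (e : R ≃ₐ[A] S) :
    UnitValuesGenerate F S := by
  have h_surj : Function.Surjective (Units.map ((e : R →ₐ[A] S) : R →* S)) :=
    (Units.mapEquiv (e : R ≃* S)).surjective
  have : IsLocalHom (e : R →ₐ[A] S) := ⟨fun x hx ↦ (isUnit_map_iff e x).mp hx⟩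
  have h_image := image_unitsMap_unitValues F h_surj
  refine ⟨h_image ▸ h.1.image _, ?_⟩
  rw [← h_image, ← Set.image_div, ← MonoidHom.map_closure, h.2,
    Subgroup.map_top_of_surjective _ h_surj]

lemma unitValues_prod (F : A[X]) :
    unitValues F (R × S) = MulEquiv.prodUnits ⁻¹' (unitValues F R ×ˢ unitValues F S) := by
  ext s
  constructor
  · rintro ⟨u, hu⟩
    rw [aeval_prod_apply, Prod.ext_iff] at hu
    exact ⟨⟨(MulEquiv.prodUnits u).1, hu.1⟩, ⟨(MulEquiv.prodUnits u).2, hu.2⟩⟩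
  · rintro ⟨⟨u, hu⟩, ⟨v, hv⟩⟩
    refine ⟨MulEquiv.prodUnits.symm (u, v), ?_⟩
    rw [aeval_prod_apply]
    exact Prod.ext hu hv

lemma UnitValuesGenerate.prod {F : A[X]} (hR : UnitValuesGenerate F R)
    (hS : UnitValuesGenerate F S) : UnitValuesGenerate F (R × S) := by
  have h_image : unitValues F (R × S) =
      (MulEquiv.prodUnits (M := R) (N := S)).symm.toMonoidHom ''
        (unitValues F R ×ˢ unitValues F S) :=
    (unitValues_prod F).trans (MulEquiv.prodUnits.toEquiv.image_symm_eq_preimage _).symm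
  rw [UnitValuesGenerate, h_image]
  refine ⟨(hR.1.prod hS.1).image _, ?_⟩
  rw [← Set.image_div, ← MonoidHom.map_closure, Set.prod_div_prod_comm,
    Subgroup.closure_prod hR.1.one_mem_div hS.1.one_mem_div, hR.2, hS.2, Subgroup.top_prod_top]
  exact Subgroup.map_top_of_surjective _ MulEquiv.prodUnits.symm.surjective

-- Hensel lifting, applied to the root `u` of `F - z F(u)` modulo nilpotents.
lemma mem_unitValues_div_of_isNilpotent_sub_one {F : A[X]} {u : R} (hu : IsUnit u)
    (hF : IsUnit (aeval u F)) (hF' : IsUnit (aeval u (derivative F))) {z : Rˣ}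
    (hz : IsNilpotent ((z : R) - 1)) : z ∈ unitValues F R / unitValues F R := by
  set P : R[X] := F.map (algebraMap A R) - C (aeval u F * z)
  have hP : IsNilpotent (aeval u P) := by
    have h_eval : aeval u P = -(aeval u F * (z - 1)) := by
      simp only [P, map_mul, aeval_sub, aeval_map_algebraMap, coe_aeval_eq_eval, eval_C]
      ring
    rw [h_eval]
    exact ((Commute.all _ _).isNilpotent_mul_left hz).neg
  have hP' : IsUnit (aeval u (derivative P)) := by simpa [P, derivative_map] using hF'
  obtain ⟨v, ⟨huv, hv⟩, -⟩ := existsUnique_nilpotent_sub_and_aeval_eq_zero hP hP'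
  have hv_unit : IsUnit v := by
    simpa using huv.neg.isUnit_add_left_of_commute hu (Commute.all _ _)
  have hv_eval : aeval v F = aeval u F * z := by
    simpa [P, sub_eq_zero] using hv
  refine Set.mem_div.mpr ⟨hF.unit * z, ⟨hv_unit.unit, hv_eval⟩, hF.unit, ⟨hu.unit, rfl⟩, ?_⟩
  exact mul_div_cancel_left _ _

lemma isLocalHom_of_isNilpotent_of_map_eq_zero {φ : R →ₐ[A] S} (hφ : Function.Surjective φ)
    (hker : ∀ x, φ x = 0 → IsNilpotent x) : IsLocalHom φ := by
  refine ⟨fun x hx ↦ ?_⟩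
  obtain ⟨y, hy⟩ := hφ (hx.unit⁻¹ : Sˣ)
  have h_nil : IsNilpotent (x * y - 1) := hker _ <| by
    rw [map_sub, map_mul, hy, IsUnit.mul_val_inv, map_one, sub_self]
  have h_unit := h_nil.isUnit_add_one
  rw [sub_add_cancel] at h_unit
  exact isUnit_of_mul_isUnit_left h_unit

theorem UnitValuesGenerate.of_surjective {F : A[X]} (h : UnitValuesGenerate F S) {φ : R →ₐ[A] S}
    (hφ : Function.Surjective φ) (hker : ∀ x, φ x = 0 → IsNilpotent x) {u : S} (hu : IsUnit u)
    (hF : IsUnit (aeval u F)) (hF' : IsUnit (aeval u (derivative F))) :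
    UnitValuesGenerate F R := by
  have : IsLocalHom φ := isLocalHom_of_isNilpotent_of_map_eq_zero hφ hker
  have h_surj : Function.Surjective (Units.map (φ : R →* S)) :=
    IsLocalRing.surjective_units_map_of_local_ringHom (φ : R →+* S) hφ ⟨this.map_nonunit⟩
  have h_image := image_unitsMap_unitValues F h_surj
  obtain ⟨w, rfl⟩ := hφ u
  rw [aeval_algHom_apply] at hF hF'
  have h_ker : (Units.map (φ : R →* S)).ker ≤
      Subgroup.closure (unitValues F R / unitValues F R) := fun z hz ↦ by
    refine Subgroup.subset_closure <| mem_unitValues_div_of_isNilpotent_sub_one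
      (isUnit_of_map_unit φ _ hu) (isUnit_of_map_unit φ _ hF) (isUnit_of_map_unit φ _ hF')
      (hker _ ?_)
    rw [map_sub, map_one, sub_eq_zero]
    exact congrArg Units.val hz
  refine ⟨Set.image_nonempty.mp (h_image ▸ h.1), ?_⟩
  rw [← Subgroup.comap_map_eq_self h_ker, MonoidHom.map_closure, Set.image_div, h_image, h.2,
    Subgroup.comap_top]

end Algebra

lemma isCoprime_map_of_resultant_ne_zero {R k : Type*} [CommRing R] [Field k] {F G : R[X]}
    (φ : R →+* k) (hF : F.natDegree ≠ 0) (h : φ (resultant F G) ≠ 0) :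
    IsCoprime (F.map φ) (G.map φ) := by
  obtain ⟨P, Q, -, -, h_bezout⟩ :=
    exists_mul_add_mul_eq_C_resultant F G le_rfl le_rfl (Or.inl hF)
  have h_unit : IsUnit (C (φ (resultant F G))) := isUnit_C.mpr h.isUnit
  rw [← map_C, ← h_bezout, Polynomial.map_add, Polynomial.map_mul, Polynomial.map_mul] at h_unit
  obtain ⟨c, hc⟩ := h_unit.exists_left_inv
  exact ⟨c * P.map φ, c * Q.map φ, by linear_combination hc⟩

lemma resultant_ne_zero_of_isCoprime_map {R S : Type*} [CommRing R] [CommRing S] [IsDomain S]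
    {F G : R[X]} {φ : R →+* S} (hφ : Function.Injective φ) (h : IsCoprime (F.map φ) (G.map φ)) :
    resultant F G ≠ 0 := by
  have h_map := resultant_ne_zero _ _ h
  rw [natDegree_map_eq_of_injective hφ, natDegree_map_eq_of_injective hφ,
    resultant_map_map] at h_map
  exact fun h0 ↦ h_map (by rw [h0, map_zero])

lemma eventually_intCast_zmod_ne_zero {n : ℤ} (hn : n ≠ 0) :
    ∀ᶠ p : ℕ in atTop, (n : ZMod p) ≠ 0 := by
  filter_upwards [eventually_gt_atTop n.natAbs] with p hp h0
  rw [ZMod.intCast_zmod_eq_zero_iff_dvd, Int.natCast_dvd] at h0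
  exact hp.not_ge (Nat.le_of_dvd (Int.natAbs_pos.mpr hn) h0)

lemma two_mul_card_le_card_of_ne_top {G : Type*} [Group G] [Finite G] {H : Subgroup G}
    (hH : H ≠ ⊤) : 2 * Nat.card H ≤ Nat.card G := by
  rw [← H.index_mul_card]
  exact Nat.mul_le_mul_right _ (Subgroup.one_lt_index_of_ne_top hH)

section Prime

variable {p : ℕ} [Fact p.Prime]

-- A proper subgroup containing all ratios of unit values has order `m ≤ (p - 1) / 2`, and the
-- `m`-th powers of the unit values of `F` all coincide.
lemma unitValuesGenerate_zmod_prime {F : (ZMod p)[X]} (hF : IsCoprime F (derivative F))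
    (hdeg : 0 < F.natDegree) (hp : F.natDegree ^ 2 + (F.natDegree + 1) ^ 2 < p) :
    UnitValuesGenerate F (ZMod p) := by
  have h_exists {m : ℕ} (hm : 1 ≤ m) (hmp : 2 * m < p) {c : ZMod p} (hc : c ≠ 0) :
      ∃ u ≠ 0, F.eval u ≠ 0 ∧ F.eval u ^ m ≠ c := by
    refine exists_eval_pow_ne hF hdeg (by rwa [ZMod.card]) hm (by rw [ZMod.card]; omega) ?_ hc
    rw [Ne, ZMod.natCast_eq_zero_iff, (Fact.out : p.Prime).dvd_factorial]
    nlinarith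
  have h_mem {u : ZMod p} (hu : u ≠ 0) (hFu : F.eval u ≠ 0) :
      Units.mk0 _ hFu ∈ unitValues F (ZMod p) :=
    ⟨Units.mk0 u hu, congrFun (coe_aeval_eq_eval u) F⟩
  obtain ⟨u, hu, hFu, -⟩ := h_exists le_rfl (by nlinarith) one_ne_zero
  set s := Units.mk0 _ hFu
  refine ⟨⟨s, h_mem hu hFu⟩, ?_⟩
  set H := Subgroup.closure (unitValues F (ZMod p) / unitValues F (ZMod p))
  by_contra hH
  have h_card : 2 * Nat.card H ≤ p - 1 := by
    simpa only [Nat.card_eq_fintype_card, ZMod.card_units] using two_mul_card_le_card_of_ne_top hH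
  have h_card_lt : 2 * Nat.card H < p := h_card.trans_lt (Nat.sub_lt (NeZero.pos p) one_pos)
  obtain ⟨v, hv, hFv, h_ne⟩ := h_exists Nat.card_pos h_card_lt
    (pow_ne_zero (Nat.card H) s.ne_zero)
  have h_ratio : Units.mk0 _ hFv / s ∈ H :=
    Subgroup.subset_closure (Set.div_mem_div (h_mem hv hFv) (h_mem hu hFu))
  have h_pow : (Units.mk0 _ hFv / s) ^ Nat.card H = 1 :=
    congrArg Subtype.val (pow_card_eq_one' (x := (⟨_, h_ratio⟩ : H)))
  rw [div_pow, div_eq_one] at h_pow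
  exact h_ne (congrArg Units.val h_pow)

lemma exists_eval_ne_zero_and_derivative_eval_ne_zero {F : (ZMod p)[X]}
    (hF : IsCoprime F (derivative F)) (hdeg : 0 < F.natDegree) (hp : 2 * F.natDegree < p) :
    ∃ u ≠ 0, F.eval u ≠ 0 ∧ (derivative F).eval u ≠ 0 := by
  by_contra! h_zero
  have hF0 : F ≠ 0 := ne_zero_of_natDegree_gt hdeg
  have hF'0 : derivative F ≠ 0 := fun h ↦ by
    rw [h, isCoprime_zero_right] at hF
    exact hdeg.ne' (natDegree_eq_zero_of_isUnit hF)
  refine mul_ne_zero (mul_ne_zero X_ne_zero hF0) hF'0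
    (eq_zero_of_natDegree_lt_card_of_eval_eq_zero' _ univ (fun u _ ↦ ?_) ?_)
  · simp only [eval_mul, eval_X, mul_eq_zero, or_assoc]
    tauto
  · have h_deriv := natDegree_derivative_lt hdeg.ne'
    rw [card_univ, ZMod.card, natDegree_mul (mul_ne_zero X_ne_zero hF0) hF'0,
      natDegree_mul X_ne_zero hF0, natDegree_X]
    omega

lemma isNilpotent_of_castHom_eq_zero {e : ℕ} (h : p ∣ p ^ e) {x : ZMod (p ^ e)}
    (hx : ZMod.castHom h (ZMod p) x = 0) : IsNilpotent x := by
  obtain ⟨n, rfl⟩ := ZMod.natCast_zmod_surjective x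
  rw [map_natCast, ZMod.natCast_eq_zero_iff] at hx
  refine ⟨e, ?_⟩
  rw [← Nat.cast_pow, ZMod.natCast_eq_zero_iff]
  exact pow_dvd_pow_of_dvd hx e

end Prime

lemma UnitValuesGenerate.zmod_mul {F : ℤ[X]} {m n : ℕ} (hmn : m.Coprime n)
    (hm : UnitValuesGenerate F (ZMod m)) (hn : UnitValuesGenerate F (ZMod n)) :
    UnitValuesGenerate F (ZMod (m * n)) :=
  (hm.prod hn).of_algEquiv (AlgEquiv.ofRingEquiv (f := (ZMod.chineseRemainder hmn).symm) (by simp))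

lemma eventually_unitValuesGenerate_zmod_primePow {F : ℤ[X]} (hdeg : 0 < F.natDegree)
    (hF : Squarefree (F.map (Int.castRingHom ℚ))) :
    ∀ᶠ p : ℕ in atTop, p.Prime → ∀ e ≠ 0, UnitValuesGenerate F (ZMod (p ^ e)) := by
  have h_res : resultant F (derivative F) ≠ 0 := by
    refine resultant_ne_zero_of_isCoprime_map (Int.castRingHom ℚ).injective_int ?_
    rw [← derivative_map]
    exact PerfectField.separable_iff_squarefree.mpr hF
  have h_lead : F.leadingCoeff ≠ 0 := leadingCoeff_ne_zero.mpr (ne_zero_of_natDegree_gt hdeg)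
  filter_upwards [eventually_intCast_zmod_ne_zero h_res, eventually_intCast_zmod_ne_zero h_lead,
    eventually_gt_atTop (F.natDegree ^ 2 + (F.natDegree + 1) ^ 2)] with p hp_res hp_lead hp hp_prime
  intro e he
  have : Fact p.Prime := ⟨hp_prime⟩
  set f : (ZMod p)[X] := F.map (algebraMap ℤ (ZMod p)) with hf
  have hf_deg : f.natDegree = F.natDegree := natDegree_map_of_leadingCoeff_ne_zero _ hp_lead
  have hf_coprime : IsCoprime f (derivative f) := by
    rw [derivative_map]
    exact isCoprime_map_of_resultant_ne_zero _ hdeg.ne' hp_res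
  have h_gen : UnitValuesGenerate F (ZMod p) := by
    have := unitValuesGenerate_zmod_prime hf_coprime (hf_deg ▸ hdeg) (hf_deg ▸ hp)
    simpa only [UnitValuesGenerate, unitValues, f, aeval_map_algebraMap] using this
  obtain ⟨u, hu, hfu, hfu'⟩ := exists_eval_ne_zero_and_derivative_eval_ne_zero hf_coprime
    (hf_deg ▸ hdeg) (by rw [hf_deg]; nlinarith)
  rw [hf, eval_map_algebraMap] at hfu
  rw [hf, derivative_map, eval_map_algebraMap] at hfu'
  have h_dvd : p ∣ p ^ e := dvd_pow_self p he
  exact h_gen.of_surjective (φ := (ZMod.castHom h_dvd (ZMod p)).toIntAlgHom)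
    (ZMod.castHom_surjective h_dvd) (fun x hx ↦ isNilpotent_of_castHom_eq_zero h_dvd hx)
    hu.isUnit hfu.isUnit hfu'.isUnit

theorem exists_forall_unitValuesGenerate_zmod {F : ℤ[X]} (hdeg : 0 < F.natDegree)
    (hF : Squarefree (F.map (Int.castRingHom ℚ))) :
    ∃ K : ℕ, ∀ q : ℕ, 0 < q → (∀ p : ℕ, p.Prime → p ∣ q → K < p) →
      UnitValuesGenerate F (ZMod q) := by
  obtain ⟨K, hK⟩ := eventually_atTop.mp (eventually_unitValuesGenerate_zmod_primePow hdeg hF)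
  refine ⟨K, fun q ↦ ?_⟩
  induction q using Nat.recOnPosPrimePosCoprime with
  | zero => exact fun h ↦ absurd h (lt_irrefl _)
  | one =>
    intro _ _
    exact ⟨⟨1, 1, Subsingleton.elim _ _⟩, Subsingleton.elim _ _⟩
  | prime_pow p e hp he =>
    exact fun _ h ↦ hK p (h p hp (dvd_pow_self p he.ne')).le hp e he.ne'
  | coprime m n hm hn hmn ihm ihn =>
    exact fun _ h ↦ .zmod_mul hmn
      (ihm (by omega) fun p hp hpm ↦ h p hp (hpm.mul_right n))
      (ihn (by omega) fun p hp hpn ↦ h p hp (hpn.mul_left m))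

end UnitValues

section WeakUniformDistribution

open Filter Topology Asymptotics Finset Polynomial
open scoped Pointwise

variable {q : ℕ} {f : ℕ → ℤ} {F : ℤ[X]}

/-- `f` is weakly uniformly distributed modulo `q`: its values are infinitely often coprime to `q`,
and those values are equidistributed among the residue classes coprime to `q`. -/
def WeaklyUniformlyDistributed (f : ℕ → ℤ) (q : ℕ) : Prop :=
  {n : ℕ | Int.gcd (f n) (q : ℤ) = 1}.Infinite ∧
    ∀ a : ℤ, Int.gcd a (q : ℤ) = 1 →
      Tendsto (fun x : ℝ ↦ (cnt x (fun n ↦ f n ≡ a [ZMOD (q : ℤ)]) : ℝ)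
        / (cnt x (fun n ↦ Int.gcd (f n) (q : ℤ) = 1) : ℝ)) atTop (𝓝 (1 / (q.totient : ℝ)))

/-- `f` is a multiplicative function with `f p = F(p)` for all primes `p`. -/
structure IsPolynomiallyDefined (f : ℕ → ℤ) (F : ℤ[X]) : Prop where
  map_one : f 1 = 1
  map_mul : ∀ m n : ℕ, m.Coprime n → f (m * n) = f m * f n
  map_prime : ∀ p : ℕ, p.Prime → f p = F.eval (p : ℤ)

lemma isUnit_intCast_zmod_iff (q : ℕ) (a : ℤ) : IsUnit (a : ZMod q) ↔ Int.gcd a q = 1 := by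
  rw [ZMod.coe_int_isUnit_iff_isCoprime, isCoprime_comm, Int.isCoprime_iff_gcd_eq_one]

lemma cnt_eq_card {x : ℝ} (hx : 0 ≤ x) (P : ℕ → Prop) [DecidablePred P] :
    cnt x P = #{n ∈ Icc 1 ⌊x⌋₊ | P n} := by
  rw [cnt, ← Set.ncard_coe_finset]
  congr 1
  ext n
  simp only [Set.mem_ofPred_eq, coe_filter, mem_Icc, Nat.le_floor_iff hx, and_assoc,
    Nat.succ_le_iff]

lemma infinite_of_tendsto_card_filter_atTop {P : ℕ → Prop} [DecidablePred P]
    (h : Tendsto (fun x ↦ #{n ∈ Icc 1 x | P n}) atTop atTop) : {n | P n}.Infinite := by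
  intro h_fin
  obtain ⟨x, hx⟩ := (h.eventually_gt_atTop #h_fin.toFinset).exists
  refine hx.not_ge (card_le_card fun n hn ↦ ?_)
  exact h_fin.mem_toFinset.mpr (mem_filter.mp hn).2

section Characters

variable {𝕜 : Type*} [RCLike 𝕜]

lemma norm_dirichletCharacter_apply [NeZero q] (χ : DirichletCharacter 𝕜 q) (a : ZMod q) :
    ‖χ a‖ = (1 : DirichletCharacter ℝ q) a := by
  by_cases ha : IsUnit a
  · obtain ⟨u, rfl⟩ := ha
    rw [χ.unit_norm_eq_one, MulChar.one_apply_coe]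
  · rw [χ.map_nonunit ha, MulChar.map_nonunit _ ha, norm_zero]

lemma summatory_trivialChar (y : ℕ → ZMod q) [DecidablePred fun n ↦ IsUnit (y n)] (x : ℕ) :
    summatory (fun n ↦ (1 : DirichletCharacter 𝕜 q) (y n)) x = #{n ∈ Icc 1 x | IsUnit (y n)} := by
  rw [summatory, card_filter, Nat.cast_sum]
  refine sum_congr rfl fun n _ ↦ ?_
  split_ifs with h
  · rw [MulChar.one_apply h, Nat.cast_one]
  · rw [MulChar.map_nonunit _ h, Nat.cast_zero]

variable [NeZero q]

lemma totient_mul_card_eq_sum_char (y : ℕ → ZMod q) {a : ZMod q} (ha : IsUnit a) (x : ℕ) :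
    (q.totient : ℂ) * #{n ∈ Icc 1 x | y n = a} =
      ∑ χ : DirichletCharacter ℂ q, χ a⁻¹ * summatory (fun n ↦ χ (y n)) x := by
  simp only [summatory, mul_sum]
  rw [sum_comm, sum_congr rfl fun n _ ↦ DirichletCharacter.sum_char_inv_mul_char_eq ℂ ha (y n),
    ← sum_filter, sum_const, nsmul_eq_mul, mul_comm]
  simp only [eq_comm]

-- Weyl's criterion for the group of units modulo `q`.
theorem tendsto_card_eq_div_card_isUnit {y : ℕ → ZMod q} [DecidablePred fun n ↦ IsUnit (y n)]
    (h_top : Tendsto (fun x ↦ #{n ∈ Icc 1 x | IsUnit (y n)}) atTop atTop)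
    (h_char : ∀ χ : DirichletCharacter ℂ q, χ ≠ 1 → summatory (fun n ↦ χ (y n)) =o[atTop]
      fun x ↦ (#{n ∈ Icc 1 x | IsUnit (y n)} : ℝ)) {a : ZMod q} (ha : IsUnit a) :
    Tendsto (fun x ↦ (#{n ∈ Icc 1 x | y n = a} : ℝ) / #{n ∈ Icc 1 x | IsUnit (y n)}) atTop
      (𝓝 (1 / (q.totient : ℝ))) := by
  classical
  have h_ratio (χ : DirichletCharacter ℂ q) :
      Tendsto (fun x ↦ summatory (fun n ↦ χ (y n)) x / #{n ∈ Icc 1 x | IsUnit (y n)}) atTop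
        (𝓝 (if χ = 1 then 1 else 0)) := by
    split_ifs with hχ
    · refine tendsto_const_nhds.congr' ?_
      filter_upwards [h_top.eventually_ne_atTop 0] with x hx
      rw [hχ, summatory_trivialChar, div_self (Nat.cast_ne_zero.mpr hx)]
    · refine IsLittleO.tendsto_div_nhds_zero ?_
      simpa only [Complex.ofReal_natCast] using Complex.isLittleO_ofReal_right.mpr (h_char χ hχ)
  have h_sum := tendsto_finsetSum univ fun χ _ ↦ (h_ratio χ).const_mul (χ a⁻¹)
  have h_inv : IsUnit a⁻¹ := by
    obtain ⟨u, rfl⟩ := ha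
    rw [ZMod.inv_coe_unit]
    exact u⁻¹.isUnit
  simp only [mul_ite, mul_one, mul_zero, sum_ite_eq', mem_univ, if_true, MulChar.one_apply h_inv,
    mul_div_assoc', ← sum_div, ← totient_mul_card_eq_sum_char y ha] at h_sum
  have h_totient : (q.totient : ℂ) ≠ 0 :=
    Nat.cast_ne_zero.mpr (Nat.totient_pos.mpr (NeZero.pos q)).ne'
  have h_lim := h_sum.const_mul (q.totient : ℂ)⁻¹
  simp only [mul_div_assoc, inv_mul_cancel_left₀ h_totient, mul_one] at h_lim
  rw [← Filter.tendsto_ofReal_iff, one_div]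
  push_cast
  exact h_lim

end Characters

lemma norm_sum_lt_sum_norm_of_not_sameRay {ι E : Type*} [NormedAddCommGroup E] [NormedSpace ℝ E]
    [StrictConvexSpace ℝ E] {s : Finset ι} {z : ι → E} {i j : ι} (hi : i ∈ s) (hj : j ∈ s)
    (hij : ¬ SameRay ℝ (z i) (z j)) : ‖∑ k ∈ s, z k‖ < ∑ k ∈ s, ‖z k‖ := by
  classical
  have hj' : j ∈ s.erase i := mem_erase.mpr ⟨fun h ↦ hij (h ▸ .rfl), hj⟩
  rw [← add_sum_erase s _ hi, ← add_sum_erase _ _ hj', ← add_sum_erase s _ hi,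
    ← add_sum_erase _ _ hj', ← add_assoc, ← add_assoc]
  exact (norm_add_le _ _).trans_lt
    (add_lt_add_of_lt_of_le (norm_add_lt_of_not_sameRay hij) (norm_sum_le _ _))

lemma UnitValuesGenerate.exists_ne {A R M : Type*} [CommRing A] [CommRing R] [Algebra A R]
    [Group M] {F : A[X]} (h : UnitValuesGenerate F R) {χ : Rˣ →* M} (hχ : χ ≠ 1) :
    ∃ s ∈ unitValues F R, ∃ t ∈ unitValues F R, χ s ≠ χ t := by
  by_contra! h_eq
  have h_ker : Subgroup.closure (unitValues F R / unitValues F R) ≤ χ.ker := by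
    refine (Subgroup.closure_le _).mpr ?_
    rintro _ ⟨s, hs, t, ht, rfl⟩
    exact MonoidHom.mem_ker.mpr ((_root_.map_div χ s t).trans (div_eq_one.mpr (h_eq s hs t ht)))
  rw [h.2, top_le_iff, MonoidHom.ker_eq_top_iff] at h_ker
  exact hχ h_ker

section UnitValuesGenerate

variable [NeZero q]

lemma UnitValuesGenerate.sum_trivialChar_pos (h : UnitValuesGenerate F (ZMod q)) :
    0 < ∑ u : (ZMod q)ˣ, (1 : DirichletCharacter ℝ q) (aeval (u : ZMod q) F) := by
  obtain ⟨s, u, hu⟩ := h.1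
  refine sum_pos' (fun v _ ↦ ?_) ⟨u, mem_univ u, ?_⟩
  · rw [← norm_dirichletCharacter_apply (1 : DirichletCharacter ℝ q)]
    exact norm_nonneg _
  · rw [hu, MulChar.one_apply_coe]
    exact one_pos

lemma UnitValuesGenerate.norm_sum_char_lt (h : UnitValuesGenerate F (ZMod q))
    {χ : DirichletCharacter ℂ q} (hχ : χ ≠ 1) :
    ‖∑ u : (ZMod q)ˣ, χ (aeval (u : ZMod q) F)‖ <
      ∑ u : (ZMod q)ˣ, (1 : DirichletCharacter ℝ q) (aeval (u : ZMod q) F) := by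
  have h_ne : χ.toUnitHom ≠ 1 := fun h_one ↦ hχ (MulChar.ext fun a ↦ by
    rw [← MulChar.coe_toUnitHom, h_one, MulChar.one_apply_coe, MonoidHom.one_apply, Units.val_one])
  obtain ⟨s, ⟨u, hu⟩, t, ⟨v, hv⟩, hst⟩ := h.exists_ne h_ne
  have h_not_sameRay : ¬ SameRay ℝ (χ (aeval (u : ZMod q) F)) (χ (aeval (v : ZMod q) F)) := by
    rw [hu, hv, sameRay_iff_of_norm_eq (by rw [χ.unit_norm_eq_one, χ.unit_norm_eq_one]),
      ← MulChar.coe_toUnitHom, ← MulChar.coe_toUnitHom, Units.val_inj]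
    exact hst
  simpa only [norm_dirichletCharacter_apply] using
    norm_sum_lt_sum_norm_of_not_sameRay (z := fun w : (ZMod q)ˣ ↦ χ (aeval (w : ZMod q) F))
      (mem_univ u) (mem_univ v) h_not_sameRay

end UnitValuesGenerate

namespace IsPolynomiallyDefined

variable [NeZero q] {𝕜 : Type*} [RCLike 𝕜]

lemma isMajorizedMultiplicative (hf : IsPolynomiallyDefined f F) (χ : DirichletCharacter 𝕜 q) :
    IsMajorizedMultiplicative (fun n ↦ χ (f n))
      (fun n ↦ (1 : DirichletCharacter ℝ q) (f n)) where
  map_mul m n hmn := by rw [hf.map_mul m n hmn, Int.cast_mul, _root_.map_mul]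
  norm_le n := (norm_dirichletCharacter_apply χ _).le
  le_one n := (Real.le_norm_self _).trans (DirichletCharacter.norm_le_one _ _)
  map_one := by rw [hf.map_one, Int.cast_one, _root_.map_one]

lemma hasPrimeMean (hf : IsPolynomiallyDefined f F) (H : ZMod q → 𝕜) :
    HasPrimeMean (fun n ↦ H (f n))
      ((q.totient : 𝕜)⁻¹ * ∑ u : (ZMod q)ˣ, H (aeval (u : ZMod q) F)) := by
  refine (hasPrimeMean_zmod fun a ↦ H (aeval a F)).congr fun p hp ↦ ?_
  have h_cast : ((F.eval (p : ℤ) : ℤ) : ZMod q) = aeval (p : ZMod q) F := by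
    simpa using (aeval_algebraMap_apply (ZMod q) (p : ℤ) F).symm
  rw [hf.map_prime p hp, h_cast]

theorem weaklyUniformlyDistributed (hf : IsPolynomiallyDefined f F)
    (h : UnitValuesGenerate F (ZMod q)) : WeaklyUniformlyDistributed f q := by
  classical
  have hg := hf.isMajorizedMultiplicative (1 : DirichletCharacter ℝ q)
  have hα := hf.hasPrimeMean (1 : DirichletCharacter ℝ q)
  have h_totient : 0 < (q.totient : ℝ)⁻¹ :=
    inv_pos.mpr (Nat.cast_pos.mpr (Nat.totient_pos.mpr (NeZero.pos q)))
  have h_card : (fun x ↦ (#{n ∈ Icc 1 x | IsUnit (f n : ZMod q)} : ℝ)) =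
      summatory fun n ↦ (1 : DirichletCharacter ℝ q) (f n) :=
    funext fun x ↦ (summatory_trivialChar _ x).symm
  have h_top : Tendsto (fun x ↦ #{n ∈ Icc 1 x | IsUnit (f n : ZMod q)}) atTop atTop := by
    rw [← tendsto_natCast_atTop_iff (R := ℝ), h_card]
    exact hg.tendsto_summatory_atTop hα (mul_pos h_totient h.sum_trivialChar_pos)
  have h_char (χ : DirichletCharacter ℂ q) (hχ : χ ≠ 1) : summatory (fun n ↦ χ (f n))
      =o[atTop] fun x ↦ (#{n ∈ Icc 1 x | IsUnit (f n : ZMod q)} : ℝ) := by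
    rw [h_card]
    refine (hf.isMajorizedMultiplicative χ).summatory_isLittleO hg hα (hf.hasPrimeMean χ) ?_
    rw [norm_mul, norm_inv, RCLike.norm_natCast]
    exact mul_lt_mul_of_pos_left (h.norm_sum_char_lt hχ) h_totient
  simp only [← isUnit_intCast_zmod_iff, WeaklyUniformlyDistributed]
  refine ⟨infinite_of_tendsto_card_filter_atTop h_top, fun a ha ↦ ?_⟩
  refine ((tendsto_card_eq_div_card_isUnit h_top h_char ha).comp
    (tendsto_nat_floor_atTop (α := ℝ))).congr' ?_
  filter_upwards [eventually_ge_atTop 0] with x hx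
  simp only [cnt_eq_card hx, Function.comp_apply, ZMod.intCast_eq_intCast_iff]

end IsPolynomiallyDefined

end WeakUniformDistribution

/-- **Proposition 1.1 (Narkiewicz).** For a polynomially-defined multiplicative function `f`
(with defining nonconstant polynomial `F` without multiple roots), there is a constant
`C = C(F)` such that `f` is weakly uniformly distributed modulo every positive integer `q`
all of whose prime factors exceed `C`. -/
theorem stmt5 (f : ℕ → ℤ) (F : Polynomial ℤ)
    (hf1 : f 1 = 1)
    (hfm : ∀ m n : ℕ, Nat.Coprime m n → f (m * n) = f m * f n)
    (hfp : ∀ p : ℕ, p.Prime → f p = F.eval (p : ℤ))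
    (hFdeg : 0 < F.natDegree)
    (hFsep : Squarefree (F.map (Int.castRingHom ℚ))) :
    ∃ C : ℕ, ∀ q : ℕ, 0 < q → (∀ p : ℕ, p.Prime → p ∣ q → C < p) →
      {n : ℕ | Int.gcd (f n) (q : ℤ) = 1}.Infinite ∧
      ∀ a : ℤ, Int.gcd a (q : ℤ) = 1 →
        Filter.Tendsto
          (fun x : ℝ => (cnt x (fun n => f n ≡ a [ZMOD (q : ℤ)]) : ℝ)
              / (cnt x (fun n => Int.gcd (f n) (q : ℤ) = 1) : ℝ))
          Filter.atTop (nhds (1 / (Nat.totient q : ℝ))) := by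
  obtain ⟨K, hK⟩ := exists_forall_unitValuesGenerate_zmod hFdeg hFsep
  have hf : IsPolynomiallyDefined f F := ⟨hf1, hfm, hfp⟩
  refine ⟨K, fun q hq hpq ↦ ?_⟩
  have : NeZero q := ⟨hq.ne'⟩
  exact hf.weaklyUniformlyDistributed (hK q hq hpq)
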